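/- arXiv:1807.05869 — 3 statements merged into one kernel-verified Lean document; each statement's English description precedes it below -/
import Mathlib

section
/- Let m ≥ 3 and n ≥ 3 be integers and let A = ℂ[a,b]/(a^m − b^{m(n−1)}, ab) be graded with weights w(a) = n − 1 and w(b) = 1 (this is the relative coinvariant ring of the parabolic subgroup G(m,m,n−1) inside the complex reflection group G(m,m,n)). Then the Hilbert polynomial of A is p(A,t) = Σ_{i=0}^{m(n−1)} t^i + Σ_{i=1}^{m−1} t^{i(n−1)}; in particular H(A) is not unimodal and A is not strong Lefschetz. Nevertheless A has an element of strong Lefschetz Jordan type. -/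
/-!
Write `q = n - 1` and `N = m q`. The relations `a b = 0` and `a ^ m = b ^ N` give
`a ^ (m + 1) = 0 = b ^ (N + 1)`, so `A` is spanned by `1, b, …, b ^ N` and `a, …, a ^ (m - 1)`.
These monomials are independent: the coefficients of the pure powers, with that of `a ^ m` added to
that of `b ^ N`, vanish on the ideal and are dual to them. The basis is homogeneous, so the Hilbert
function is read off from it.

Its values in the degrees `q < q + 1 < 2 q` are `2, 1, 2`, so it is not unimodal. As `q ≥ 2`, the
piece `A_1` is spanned by `b`, so `a ∈ A_q` is killed by every linear form `ℓ`. Hence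
`ℓ ^ q : A_q → A_{2q}` is not injective although both pieces have dimension `2`, and `A` is not
strong Lefschetz.

The conjugate of the Hilbert function is `(N + 1, m - 1)`. For the non-homogeneous `ℓ = a + b` one
has `ℓ ^ i a = a ^ (i + 1)`, so `A` is generated over `K[ℓ]` by `1` and `c = a - ℓ ^ (N - m + 1)`.
Since `ℓ ^ (N + 1) = 0 = ℓ ^ (m - 1) c` and `N + 1 + (m - 1) = dim A`, the two strings form a Jordan
basis of `A`.
-/

/-- `P` is the Jordan type (multiset of Jordan block sizes) of the `k`-linear
endomorphism `f`, characterized by the ranks of the powers of `f`. -/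
def IsJordanTypeOf {k A : Type*} [Field k] [AddCommGroup A] [Module k A]
    (f : A →ₗ[k] A) (P : Multiset ℕ) : Prop :=
  (∀ p ∈ P, 0 < p) ∧
  ∀ j : ℕ, Module.finrank k (LinearMap.range (f ^ j)) = (P.map (fun p => p - j)).sum

/-- The conjugate partition of a Hilbert function `H` (whose values are bounded
by `n`): its `i`-th part (for `1 ≤ i ≤ n`) is `#{d | H d ≥ i}`; zero parts are
discarded. -/
noncomputable def conjHilb (H : ℕ → ℕ) (n : ℕ) : Multiset ℕ :=
  ((Multiset.range n).map (fun i => Set.ncard {d : ℕ | i + 1 ≤ H d})).filter (fun c => 0 < c)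

/-- A linear form `ℓ` is strong Lefschetz for the graded algebra `A` with
grading `𝒜` if `ℓ ∈ 𝒜 1` and all multiplication maps `×ℓ^j : 𝒜 i → 𝒜 (i+j)`
have maximal rank. -/
def IsSL {k A : Type*} [Field k] [CommRing A] [Algebra k A]
    (𝒜 : ℕ → Submodule k A) (ℓ : A) : Prop :=
  ℓ ∈ 𝒜 1 ∧ ∀ i j : ℕ,
    Module.finrank k ((𝒜 i).map (LinearMap.mulLeft k (ℓ ^ j))) =
      min (Module.finrank k (𝒜 i)) (Module.finrank k (𝒜 (i + j)))

/-- A sequence of integers is unimodal. -/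
def Unimodal (H : ℕ → ℕ) : Prop :=
  ∃ c : ℕ, (∀ i j : ℕ, i ≤ j → j ≤ c → H i ≤ H j) ∧ (∀ i j : ℕ, c ≤ i → i ≤ j → H j ≤ H i)

open MvPolynomial

section HilbertFunctions

variable {H : ℕ → ℕ}

theorem Unimodal.min_le (hH : Unimodal H) {i j l : ℕ} (hij : i ≤ j) (hjl : j ≤ l) :
    min (H i) (H l) ≤ H j := by
  obtain ⟨c, hmono, hanti⟩ := hH
  rcases le_total j c with hjc | hcj
  · exact (min_le_left _ _).trans (hmono i j hij hjc)
  · exact (min_le_right _ _).trans (hanti j l hcj hjl)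

theorem conjHilb_eq_of_forall_le {r n : ℕ} (hH : ∀ d, H d ≤ r) (hrn : r ≤ n) :
    conjHilb H n = conjHilb H r := by
  obtain ⟨s, rfl⟩ := Nat.exists_eq_add_of_le hrn
  have hempty (i : ℕ) : {d | r + i < H d} = ∅ :=
    Set.eq_empty_of_forall_notMem fun d hd => ((hH d).trans (r.le_add_right i)).not_gt hd
  simp [conjHilb, Multiset.range_add, hempty, Multiset.mem_replicate]

end HilbertFunctions

theorem IsSL.eq_zero_of_pow_mul_eq_zero {k A : Type*} [Field k] [CommRing A] [Algebra k A]
    {𝒜 : ℕ → Submodule k A} {ℓ : A} (hℓ : IsSL 𝒜 ℓ) {i j : ℕ} [Module.Finite k (𝒜 i)]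
    (hij : Module.finrank k (𝒜 i) ≤ Module.finrank k (𝒜 (i + j))) {x : A} (hx : x ∈ 𝒜 i)
    (hzero : ℓ ^ j * x = 0) : x = 0 := by
  let f := (LinearMap.mulLeft k (ℓ ^ j)).domRestrict (𝒜 i)
  have hrange : Module.finrank k (LinearMap.range f) = Module.finrank k (𝒜 i) := by
    rw [LinearMap.range_domRestrict, hℓ.2 i j, min_eq_left hij]
  have hker : LinearMap.ker f = ⊥ := by
    have := f.finrank_range_add_finrank_ker
    exact Submodule.finrank_eq_zero.mp (by omega)
  have hmem : (⟨x, hx⟩ : 𝒜 i) ∈ LinearMap.ker f := hzero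
  rw [hker, Submodule.mem_bot] at hmem
  exact congrArg Subtype.val hmem

theorem range_pow_eq_span {R V ι : Type*} [Semiring R] [AddCommMonoid V] [Module R V]
    {f : Module.End R V} {w : ι → V} {p : ι → ℕ}
    (hspan : Submodule.span R (Set.range fun x : ι × ℕ => (f ^ x.2) (w x.1)) = ⊤)
    (hzero : ∀ i, (f ^ p i) (w i) = 0) (j : ℕ) :
    LinearMap.range (f ^ j) =
      Submodule.span R (Set.range fun x : Σ i, Fin (p i - j) => (f ^ (j + x.2)) (w x.1)) := by
  rw [LinearMap.range_eq_map, ← hspan, Submodule.map_span, ← Set.range_comp]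
  apply le_antisymm <;> rw [Submodule.span_le]
  · rintro _ ⟨⟨i, l⟩, rfl⟩
    rw [Function.comp_apply, ← Module.End.mul_apply, ← pow_add]
    by_cases hl : l < p i - j
    · exact Submodule.subset_span ⟨⟨i, l, hl⟩, rfl⟩
    · rw [Module.End.pow_map_zero_of_le (by omega) (hzero i)]
      exact Submodule.zero_mem _
  · rintro _ ⟨⟨i, l⟩, rfl⟩
    refine Submodule.subset_span ⟨(i, l), ?_⟩
    rw [Function.comp_apply, ← Module.End.mul_apply, ← pow_add]

theorem isJordanTypeOf_of_span_eq_top {k V ι : Type*} [Field k] [AddCommGroup V] [Module k V]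
    [Fintype ι] {f : Module.End k V} {w : ι → V} {p : ι → ℕ} (hp : ∀ i, 0 < p i)
    (hspan : Submodule.span k (Set.range fun x : ι × ℕ => (f ^ x.2) (w x.1)) = ⊤)
    (hzero : ∀ i, (f ^ p i) (w i) = 0) (hsum : ∑ i, p i = Module.finrank k V) :
    IsJordanTypeOf f (Finset.univ.val.map p) := by
  refine ⟨by simpa using hp, fun j => ?_⟩
  have hli : LinearIndependent k fun x : Σ i, Fin (p i) => (f ^ (x.2 : ℕ)) (w x.1) := by
    refine linearIndependent_of_top_le_span_of_card_eq_finrank ?_ (by simpa using hsum)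
    have hrange := range_pow_eq_span hspan hzero 0
    rw [pow_zero, Module.End.one_eq_id, LinearMap.range_id] at hrange
    simpa using hrange.le
  let shift : (Σ i, Fin (p i - j)) → Σ i, Fin (p i) :=
    Sigma.map id fun i l => ⟨j + l, by have := l.2; dsimp only [id]; omega⟩
  have hshift : shift.Injective := Function.injective_id.sigma_map fun _ l l' h => by
    simpa [Fin.ext_iff] using h
  rw [range_pow_eq_span hspan hzero j]
  refine (finrank_span_eq_card (hli.comp shift hshift)).trans ?_
  simp [← Finset.sum_map_val]

section TwoBranches

variable {A : Type*} [CommRing A] {m N : ℕ} {a b : A}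

theorem add_pow_mul_left_of_mul_eq_zero (hab : a * b = 0) (n : ℕ) :
    (a + b) ^ n * a = a ^ (n + 1) := by
  induction n with
  | zero => simp
  | succ n ih => linear_combination (a + b) * ih + a ^ n * hab

theorem add_pow_of_mul_eq_zero (hab : a * b = 0) {n : ℕ} (hn : n ≠ 0) :
    (a + b) ^ n = a ^ n + b ^ n := by
  obtain ⟨n, rfl⟩ := Nat.exists_eq_add_one_of_ne_zero hn
  have hb := add_pow_mul_left_of_mul_eq_zero (mul_comm a b ▸ hab) n
  linear_combination add_pow_mul_left_of_mul_eq_zero hab n + hb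

theorem pow_eq_zero_of_pow_eq_pow (hab : a * b = 0) (h : a ^ m = b ^ N) (hN : N ≠ 0) {n : ℕ}
    (hn : m < n) : a ^ n = 0 := by
  obtain ⟨M, rfl⟩ := Nat.exists_eq_add_one_of_ne_zero hN
  refine pow_eq_zero_of_le hn ?_
  rw [pow_succ, h]
  linear_combination b ^ M * hab

/-- Generators of `A` as a module over the polynomial ring in `a + b`, when `A` is spanned by the
powers of `a` and of `b` with `a * b = 0`. The correction to `a` turns
`(a + b) ^ (m - 1) * a = a ^ m = b ^ N` into `0`. -/
def branchGenerators (m N : ℕ) (a b : A) : Fin 2 → A :=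
  ![1, a - (a + b) ^ (N - m + 1)]

theorem add_pow_mul_branchGenerators_one (hab : a * b = 0) (h : a ^ m = b ^ N) (hm : m ≠ 0)
    (hmN : m < N) : (a + b) ^ (m - 1) * branchGenerators m N a b 1 = 0 := by
  have hN : N ≠ 0 := by omega
  calc (a + b) ^ (m - 1) * (a - (a + b) ^ (N - m + 1))
      = a ^ (m - 1 + 1) - (a + b) ^ (m - 1 + (N - m + 1)) := by
        rw [mul_sub, add_pow_mul_left_of_mul_eq_zero hab, ← pow_add]
    _ = a ^ m - (a + b) ^ N := by congr 2 <;> omega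
    _ = 0 := by
        rw [add_pow_of_mul_eq_zero hab hN, pow_eq_zero_of_pow_eq_pow hab h hN hmN, h, zero_add,
          sub_self]

theorem span_mulLeft_add_pow_branchGenerators {R : Type*} [CommRing R] [Algebra R A]
    (hab : a * b = 0)
    (hspan : Submodule.span R (Set.range (a ^ ·) ∪ Set.range (b ^ ·)) = ⊤) :
    Submodule.span R (Set.range fun x : Fin 2 × ℕ =>
      (LinearMap.mulLeft R (a + b) ^ x.2) (branchGenerators m N a b x.1)) = ⊤ := by
  set S := Submodule.span R (Set.range fun x : Fin 2 × ℕ =>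
    (LinearMap.mulLeft R (a + b) ^ x.2) (branchGenerators m N a b x.1))
  have hpow (n : ℕ) : (a + b) ^ n ∈ S := Submodule.subset_span ⟨(0, n), by simp [branchGenerators]⟩
  have ha : ∀ n, a ^ n ∈ S
    | 0 => by simpa using hpow 0
    | n + 1 => by
      have hgen : (a + b) ^ n * (a - (a + b) ^ (N - m + 1)) ∈ S :=
        Submodule.subset_span ⟨(1, n), by simp [branchGenerators]⟩
      have := S.add_mem hgen (hpow (n + (N - m + 1)))
      rwa [mul_sub, ← pow_add, sub_add_cancel, add_pow_mul_left_of_mul_eq_zero hab] at this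
  have hb : ∀ n, b ^ n ∈ S
    | 0 => by simpa using hpow 0
    | n + 1 => by
      have := S.sub_mem (hpow (n + 1)) (ha (n + 1))
      rwa [add_pow_of_mul_eq_zero hab n.succ_ne_zero, add_sub_cancel_left] at this
  rw [eq_top_iff, ← hspan, Submodule.span_le, Set.union_subset_iff]
  exact ⟨Set.range_subset_iff.2 ha, Set.range_subset_iff.2 hb⟩

theorem isJordanTypeOf_mulLeft_add {k : Type*} [Field k] [Algebra k A] (hab : a * b = 0)
    (h : a ^ m = b ^ N) (hm : 2 ≤ m) (hmN : m < N)
    (hspan : Submodule.span k (Set.range (a ^ ·) ∪ Set.range (b ^ ·)) = ⊤)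
    (hdim : Module.finrank k A = N + m) :
    IsJordanTypeOf (LinearMap.mulLeft k (a + b)) {N + 1, m - 1} := by
  have hnil : (a + b) ^ (N + 1) = 0 := by
    rw [add_pow_of_mul_eq_zero hab N.succ_ne_zero,
      pow_eq_zero_of_pow_eq_pow hab h (by omega) (by omega),
      pow_eq_zero_of_pow_eq_pow (mul_comm a b ▸ hab) h.symm (by omega) N.lt_succ_self, add_zero]
  have hzero : ∀ i, (LinearMap.mulLeft k (a + b) ^ ![N + 1, m - 1] i)
      (branchGenerators m N a b i) = 0 := by
    simp [Fin.forall_fin_two, hnil, add_pow_mul_branchGenerators_one hab h (by omega) hmN]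
  exact isJordanTypeOf_of_span_eq_top (p := ![N + 1, m - 1])
    (by simp [Fin.forall_fin_two]; omega) (span_mulLeft_add_pow_branchGenerators hab hspan) hzero
    (by simp [hdim]; omega)

end TwoBranches

section LinearAlgebra

variable {R M ι : Type*} [Ring R] [Nontrivial R] [StrongRankCondition R] [AddCommGroup M]
  [Module R M] {v : ι → M}

theorem finrank_span_image_eq_card {s : Finset ι} (hv : LinearIndepOn R v s) :
    Module.finrank R (Submodule.span R (v '' s)) = s.card := by
  rw [Set.image_eq_range]
  simpa using finrank_span_eq_card hv

end LinearAlgebra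

theorem coeff_single_mul_X_pow {R σ : Type*} [CommSemiring R] [DecidableEq σ] {i j : σ}
    (f : MvPolynomial σ R) (l : ℕ) {n : ℕ} (hn : n ≠ 0) :
    coeff (Finsupp.single i l) (f * X j ^ n) =
      if j = i ∧ n ≤ l then coeff (Finsupp.single i (l - n)) f else 0 := by
  rw [X_pow_eq_monomial, coeff_mul_monomial', mul_one]
  rcases eq_or_ne j i with rfl | hji
  · simp [← Finsupp.single_tsub]
  · simp [hji, hn]

section GradedPiece

variable {R σ : Type*} [CommRing R]

/-- The degree `d` part of the quotient of a polynomial ring by an ideal `I`, where the variable `i`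
has weight `w i`: the classes of the weighted homogeneous polynomials. No homogeneity of `I` is
assumed, so these need not form a grading in general. -/
noncomputable def gradedPiece (I : Ideal (MvPolynomial σ R)) (w : σ → ℕ) (d : ℕ) :
    Submodule R (MvPolynomial σ R ⧸ I) :=
  (weightedHomogeneousSubmodule R w d).map (Ideal.Quotient.mkₐ R I).toLinearMap

variable {I : Ideal (MvPolynomial σ R)} {w : σ → ℕ}

theorem gradedPiece_eq_span (d : ℕ) :
    gradedPiece I w d =
      Submodule.span R (Ideal.Quotient.mk I '' {f | f.IsWeightedHomogeneous w d}) := by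
  have : {f : MvPolynomial σ R | f.IsWeightedHomogeneous w d} =
    weightedHomogeneousSubmodule R w d := rfl
  rw [gradedPiece, this, ← Submodule.span_eq (weightedHomogeneousSubmodule R w d),
    ← Submodule.span_image, Submodule.span_eq]
  rfl

theorem mk_X_pow_mem_gradedPiece (i : σ) (n : ℕ) :
    Ideal.Quotient.mk I (X i) ^ n ∈ gradedPiece I w (n * w i) :=
  ⟨X i ^ n, (isWeightedHomogeneous_X R w i).pow n, map_pow (Ideal.Quotient.mk I) (X i) n⟩

theorem gradedPiece_zero_weight : gradedPiece I 0 0 = ⊤ := by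
  refine eq_top_iff.2 fun x _ => ?_
  obtain ⟨f, rfl⟩ := Ideal.Quotient.mk_surjective x
  exact ⟨f, fun s _ => by simp [Finsupp.weight_apply], rfl⟩

end GradedPiece

section TwoBranchQuotient

variable (R : Type*) [CommRing R] (m N : ℕ)

/-- The ideal `(a ^ m - b ^ N, a * b)` of `R[a, b]`, with `a = X 0` and `b = X 1`. -/
noncomputable def branchIdeal : Ideal (MvPolynomial (Fin 2) R) :=
  Ideal.span {X 0 ^ m - X 1 ^ N, X 0 * X 1}

/-- The classes of `a` (for `i = 0`) and `b` (for `i = 1`) in `R[a, b] / (a ^ m - b ^ N, a * b)`. -/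
noncomputable def branchVar (i : Fin 2) : MvPolynomial (Fin 2) R ⧸ branchIdeal R m N :=
  Ideal.Quotient.mk _ (X i)

/-- The monomials `a ^ n` (for `x = ⟨0, n⟩`) and `b ^ n` (for `x = ⟨1, n⟩`) in
`R[a, b] / (a ^ m - b ^ N, a * b)`. -/
noncomputable def branchPow (x : Σ _ : Fin 2, ℕ) : MvPolynomial (Fin 2) R ⧸ branchIdeal R m N :=
  branchVar R m N x.1 ^ x.2

/-- The indices of the monomial basis `a, …, a ^ (m - 1)`, `1, b, …, b ^ N`, a subfamily of
`branchPow`. -/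
def branchBasis : Finset (Σ _ : Fin 2, ℕ) :=
  Finset.univ.sigma ![Finset.Icc 1 (m - 1), Finset.range (N + 1)]

/-- Linear forms dual to the monomial basis: the coefficients of the pure powers, except that the
relation `a ^ m = b ^ N` makes `a ^ m` contribute to the coordinate of `b ^ N`. -/
noncomputable def branchCoord (x : Σ _ : Fin 2, ℕ) : MvPolynomial (Fin 2) R →ₗ[R] R :=
  lcoeff R (Finsupp.single x.1 x.2) + if x = ⟨1, N⟩ then lcoeff R (Finsupp.single 0 m) else 0

variable {R m N}

@[simp]
theorem zero_mk_mem_branchBasis {n : ℕ} : ⟨0, n⟩ ∈ branchBasis m N ↔ 0 < n ∧ n < m := by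
  simp only [branchBasis, Finset.mem_sigma, Finset.mem_univ, Matrix.cons_val_zero, Finset.mem_Icc,
    true_and]
  omega

@[simp]
theorem one_mk_mem_branchBasis {n : ℕ} : ⟨1, n⟩ ∈ branchBasis m N ↔ n ≤ N := by
  simp [branchBasis]

theorem branchVar_zero_mul_one : branchVar R m N 0 * branchVar R m N 1 = 0 := by
  rw [branchVar, branchVar, ← map_mul, Ideal.Quotient.eq_zero_iff_mem]
  exact Ideal.subset_span (by simp)

theorem branchVar_zero_pow : branchVar R m N 0 ^ m = branchVar R m N 1 ^ N := by
  rw [branchVar, branchVar, ← map_pow, ← map_pow, Ideal.Quotient.mk_eq_mk_iff_sub_mem]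
  exact Ideal.subset_span (by simp)

theorem branchVar_mem_gradedPiece {w : Fin 2 → ℕ} (i : Fin 2) :
    branchVar R m N i ∈ gradedPiece (branchIdeal R m N) w (w i) := by
  simpa [branchVar] using mk_X_pow_mem_gradedPiece (I := branchIdeal R m N) (w := w) i 1

theorem branchVar_add_mem_iSup_gradedPiece {w : Fin 2 → ℕ} (hw : ∀ i, w i ≠ 0) :
    branchVar R m N 0 + branchVar R m N 1 ∈
      ⨆ i : ℕ, gradedPiece (branchIdeal R m N) w (i + 1) := by
  have hmem (i : Fin 2) :
      branchVar R m N i ∈ ⨆ i : ℕ, gradedPiece (branchIdeal R m N) w (i + 1) := by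
    refine Submodule.mem_iSup_of_mem (w i - 1) ?_
    rw [Nat.sub_add_cancel (Nat.one_le_iff_ne_zero.2 (hw i))]
    exact branchVar_mem_gradedPiece i
  exact Submodule.add_mem _ (hmem 0) (hmem 1)

theorem mk_monomial_eq_smul (s : Fin 2 →₀ ℕ) (c : R) :
    Ideal.Quotient.mk (branchIdeal R m N) (monomial s c) =
      c • (branchVar R m N 0 ^ s 0 * branchVar R m N 1 ^ s 1) := by
  rw [monomial_eq, Finsupp.prod_fintype _ _ (by simp), Fin.prod_univ_two, ← smul_eq_C_mul,
    ← Ideal.Quotient.mkₐ_eq_mk R, map_smul]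
  simp [branchVar]

theorem mk_mem_of_forall_branchVar_pow_mem
    {S : Submodule R (MvPolynomial (Fin 2) R ⧸ branchIdeal R m N)} {f : MvPolynomial (Fin 2) R}
    (hf : ∀ i n, Finsupp.single i n ∈ f.support → branchVar R m N i ^ n ∈ S) :
    Ideal.Quotient.mk _ f ∈ S := by
  rw [f.as_sum, map_sum]
  refine S.sum_mem fun s hs => ?_
  rw [mk_monomial_eq_smul]
  refine S.smul_mem _ ?_
  rcases eq_or_ne (s 0) 0 with h0 | h0
  · have hs' : s = Finsupp.single 1 (s 1) := by ext i; fin_cases i <;> simp [h0]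
    rw [h0, pow_zero, one_mul]
    exact hf 1 (s 1) (hs' ▸ hs)
  rcases eq_or_ne (s 1) 0 with h1 | h1
  · have hs' : s = Finsupp.single 0 (s 0) := by ext i; fin_cases i <;> simp [h1]
    rw [h1, pow_zero, mul_one]
    exact hf 0 (s 0) (hs' ▸ hs)
  obtain ⟨r, hr⟩ := Nat.exists_eq_add_one_of_ne_zero h0
  obtain ⟨t, ht⟩ := Nat.exists_eq_add_one_of_ne_zero h1
  have hzero : branchVar R m N 0 ^ s 0 * branchVar R m N 1 ^ s 1 = 0 := by
    rw [hr, ht]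
    linear_combination branchVar R m N 0 ^ r * branchVar R m N 1 ^ t *
      branchVar_zero_mul_one (R := R) (m := m) (N := N)
  rw [hzero]
  exact S.zero_mem

theorem span_branchVar_pow_eq_top :
    Submodule.span R (Set.range (branchVar R m N 0 ^ ·) ∪ Set.range (branchVar R m N 1 ^ ·)) =
      ⊤ := by
  refine eq_top_iff.2 fun x _ => ?_
  obtain ⟨f, rfl⟩ := Ideal.Quotient.mk_surjective x
  refine mk_mem_of_forall_branchVar_pow_mem fun i n _ => Submodule.subset_span ?_
  fin_cases i
  · exact Or.inl ⟨n, rfl⟩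
  · exact Or.inr ⟨n, rfl⟩

theorem branchVar_zero_mul_of_mem_gradedPiece_one {w : Fin 2 → ℕ} (hw : w 0 ≠ 1)
    {ℓ : MvPolynomial (Fin 2) R ⧸ branchIdeal R m N}
    (hℓ : ℓ ∈ gradedPiece (branchIdeal R m N) w 1) : branchVar R m N 0 * ℓ = 0 := by
  obtain ⟨f, hf, rfl⟩ := hℓ
  refine mk_mem_of_forall_branchVar_pow_mem
    (S := LinearMap.ker (LinearMap.mulLeft R (branchVar R m N 0))) fun i n hin => ?_
  have hweight : n * w i = 1 := by
    simpa [Finsupp.weight_single] using hf (mem_support_iff.1 hin)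
  match i with
  | 0 => exact absurd (Nat.eq_one_of_mul_eq_one_left hweight) hw
  | 1 =>
    obtain rfl := Nat.eq_one_of_mul_eq_one_right hweight
    simp [branchVar_zero_mul_one]

theorem branchPow_mem_span (hm : m ≠ 0) (hN : N ≠ 0) {w : Fin 2 → ℕ} (hw : m * w 0 = N * w 1)
    (x : Σ _ : Fin 2, ℕ) :
    branchPow R m N x ∈ Submodule.span R
      (branchPow R m N '' ((branchBasis m N).filter fun y => y.2 * w y.1 = x.2 * w x.1)) := by
  have hbasis {d : ℕ} {y : Σ _ : Fin 2, ℕ} (hy : y ∈ branchBasis m N) (hdeg : y.2 * w y.1 = d) :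
      branchPow R m N y ∈ Submodule.span R
        (branchPow R m N '' ((branchBasis m N).filter fun y => y.2 * w y.1 = d)) :=
    Submodule.subset_span ⟨y, Finset.mem_filter.2 ⟨hy, hdeg⟩, rfl⟩
  match x with
  | ⟨0, n⟩ =>
    rcases Nat.eq_zero_or_pos n with rfl | hn
    · simpa [branchPow] using hbasis (d := 0) (y := ⟨1, 0⟩) (by simp) (by simp)
    rcases lt_trichotomy n m with hnm | rfl | hnm
    · exact hbasis (zero_mk_mem_branchBasis.2 ⟨hn, hnm⟩) rfl
    · rw [branchPow, branchVar_zero_pow]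
      exact hbasis (y := ⟨1, N⟩) (by simp) hw.symm
    · rw [branchPow, pow_eq_zero_of_pow_eq_pow branchVar_zero_mul_one branchVar_zero_pow hN hnm]
      exact Submodule.zero_mem _
  | ⟨1, n⟩ =>
    rcases le_or_gt n N with hnN | hnN
    · exact hbasis (one_mk_mem_branchBasis.2 hnN) rfl
    · rw [branchPow, pow_eq_zero_of_pow_eq_pow (mul_comm _ _ |>.trans branchVar_zero_mul_one)
        branchVar_zero_pow.symm hm hnN]
      exact Submodule.zero_mem _

theorem gradedPiece_branchIdeal_eq_span (hm : m ≠ 0) (hN : N ≠ 0) {w : Fin 2 → ℕ}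
    (hw : m * w 0 = N * w 1) (d : ℕ) :
    gradedPiece (branchIdeal R m N) w d = Submodule.span R
      (branchPow R m N '' ((branchBasis m N).filter fun x => x.2 * w x.1 = d)) := by
  apply le_antisymm
  · rintro _ ⟨f, hf, rfl⟩
    refine mk_mem_of_forall_branchVar_pow_mem fun i n hin => ?_
    have hd : n * w i = d := by
      simpa [Finsupp.weight_single] using hf (mem_support_iff.1 hin)
    exact hd ▸ branchPow_mem_span hm hN hw ⟨i, n⟩
  · rw [Submodule.span_le]
    rintro _ ⟨x, hx, rfl⟩
    exact (Finset.mem_filter.1 hx).2 ▸ mk_X_pow_mem_gradedPiece x.1 x.2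

theorem branchCoord_apply (x : Σ _ : Fin 2, ℕ) (f : MvPolynomial (Fin 2) R) :
    branchCoord R m N x f = coeff (Finsupp.single x.1 x.2) f +
      if x = ⟨1, N⟩ then coeff (Finsupp.single 0 m) f else 0 := by
  by_cases hx : x = ⟨1, N⟩ <;> simp [branchCoord, hx]

theorem branchCoord_eq_zero_of_mem (hm : m ≠ 0) (hN : N ≠ 0) {x : Σ _ : Fin 2, ℕ}
    (hx : x ∈ branchBasis m N) {f : MvPolynomial (Fin 2) R} (hf : f ∈ branchIdeal R m N) :
    branchCoord R m N x f = 0 := by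
  obtain ⟨g, h, rfl⟩ := Ideal.mem_span_pair.1 hf
  have hcross (i : Fin 2) (n : ℕ) :
      coeff (Finsupp.single i n) (h * (X 0 * X 1 : MvPolynomial (Fin 2) R)) = 0 := by
    rw [← mul_assoc]
    fin_cases i
    · simpa using coeff_single_mul_X_pow (i := (0 : Fin 2)) (j := 1) (h * X 0) n one_ne_zero
    · rw [mul_right_comm]
      simpa using coeff_single_mul_X_pow (i := (1 : Fin 2)) (j := 0) (h * X 1) n one_ne_zero
  match x with
  | ⟨0, n⟩ =>
    have hn := (zero_mk_mem_branchBasis.1 hx).2.not_ge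
    simp [branchCoord_apply, hcross, mul_sub, coeff_single_mul_X_pow, hm, hN, hn]
  | ⟨1, n⟩ =>
    rcases (one_mk_mem_branchBasis.1 hx).lt_or_eq with hn | rfl
    · simp [branchCoord_apply, hcross, mul_sub, coeff_single_mul_X_pow, hm, hN, hn.not_ge, hn.ne]
    · simp [branchCoord_apply, hcross, mul_sub, coeff_single_mul_X_pow, hm, hN]

theorem branchCoord_X_pow (hm : m ≠ 0) {x y : Σ _ : Fin 2, ℕ}
    (hx : x ∈ branchBasis m N) (hy : y ∈ branchBasis m N) :
    branchCoord R m N x (X y.1 ^ y.2) = if x = y then 1 else 0 := by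
  rw [branchCoord_apply, coeff_X_pow, coeff_X_pow]
  match x, y with
  | ⟨0, k⟩, ⟨0, l⟩ | ⟨0, k⟩, ⟨1, l⟩ | ⟨1, k⟩, ⟨0, l⟩ | ⟨1, k⟩, ⟨1, l⟩ =>
    simp only [zero_mk_mem_branchBasis, one_mk_mem_branchBasis] at hx hy
    simp only [Finsupp.single_eq_single_iff, Sigma.mk.injEq, heq_eq_eq]
    grind

theorem linearIndepOn_branchPow (hm : m ≠ 0) (hN : N ≠ 0) :
    LinearIndepOn R (branchPow R m N) (branchBasis m N) := by
  let coord (x : branchBasis m N) : Module.Dual R (MvPolynomial (Fin 2) R ⧸ branchIdeal R m N) :=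
    ((branchIdeal R m N).restrictScalars R).liftQ (branchCoord R m N x)
      fun _ => branchCoord_eq_zero_of_mem hm hN x.2
  have hcoord (x y : branchBasis m N) :
      coord x (branchPow R m N y) = if x = y then 1 else 0 := by
    rw [branchPow, branchVar, ← map_pow]
    exact (branchCoord_X_pow hm x.2 y.2).trans (by simp only [Subtype.ext_iff])
  exact .of_pairwise_dual_eq_zero_one _ coord (fun x y hxy => by simp [hcoord, hxy])
    fun x => by simp [hcoord]

theorem finrank_gradedPiece_branchIdeal [Nontrivial R] (hm : m ≠ 0) (hN : N ≠ 0) {w : Fin 2 → ℕ}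
    (hw : m * w 0 = N * w 1) (d : ℕ) :
    Module.finrank R (gradedPiece (branchIdeal R m N) w d) =
      ((Finset.range (N + 1)).filter fun n => n * w 1 = d).card +
        ((Finset.Icc 1 (m - 1)).filter fun n => n * w 0 = d).card := by
  rw [gradedPiece_branchIdeal_eq_span hm hN hw, finrank_span_image_eq_card
    ((linearIndepOn_branchPow hm hN).mono (Finset.coe_subset.2 (Finset.filter_subset _ _))),
    branchBasis, Finset.filter_sigma, Finset.card_sigma, Fin.sum_univ_two, add_comm]
  rfl

theorem finrank_branchQuotient [Nontrivial R] (hm : m ≠ 0) (hN : N ≠ 0) :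
    Module.finrank R (MvPolynomial (Fin 2) R ⧸ branchIdeal R m N) = N + m := by
  rw [← finrank_top, ← gradedPiece_zero_weight, finrank_gradedPiece_branchIdeal hm hN (by simp)]
  simp only [Pi.zero_apply, mul_zero, Finset.filter_true, Finset.card_range, Nat.card_Icc]
  omega

end TwoBranchQuotient

section RelativeCoinvariants

/-- The Hilbert function of the relative coinvariant ring, with `q = n - 1`: the coefficients of
`∑ i ≤ m * q, t ^ i + ∑ 1 ≤ i ≤ m - 1, t ^ (i * q)`. -/
def relHilb (m q d : ℕ) : ℕ :=
  (if d ≤ m * q then 1 else 0) + ((Finset.Icc 1 (m - 1)).filter (fun i => i * q = d)).card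

variable {m q : ℕ}

theorem card_filter_mul_eq_le_one (hq : q ≠ 0) (s : Finset ℕ) (d : ℕ) :
    (s.filter fun i => i * q = d).card ≤ 1 :=
  Finset.card_le_one.2 fun _ hi _ hj => Nat.eq_of_mul_eq_mul_right (Nat.pos_of_ne_zero hq)
    ((Finset.mem_filter.1 hi).2.trans (Finset.mem_filter.1 hj).2.symm)

theorem relHilb_le_two (hq : q ≠ 0) (d : ℕ) : relHilb m q d ≤ 2 :=
  add_le_add (by split_ifs <;> simp) (card_filter_mul_eq_le_one hq _ d)

theorem one_le_relHilb_iff {d : ℕ} : 1 ≤ relHilb m q d ↔ d ≤ m * q := by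
  rw [relHilb]
  split_ifs with hd
  · simp [hd]
  · rw [zero_add, Nat.one_le_iff_ne_zero, Finset.card_ne_zero, Finset.filter_nonempty_iff]
    refine iff_of_false ?_ hd
    rintro ⟨i, hi, rfl⟩
    exact hd (Nat.mul_le_mul_right q ((Finset.mem_Icc.1 hi).2.trans (m.sub_le 1)))

theorem two_le_relHilb_iff (hq : q ≠ 0) {d : ℕ} :
    2 ≤ relHilb m q d ↔ ∃ i ∈ Finset.Icc 1 (m - 1), i * q = d := by
  rw [← Finset.filter_nonempty_iff, ← Finset.card_pos]
  have := card_filter_mul_eq_le_one hq (Finset.Icc 1 (m - 1)) d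
  have hone := one_le_relHilb_iff (m := m) (q := q) (d := d)
  rw [relHilb] at hone ⊢
  split_ifs at hone ⊢ <;> grind

theorem relHilb_mul_eq_two (hq : q ≠ 0) {i : ℕ} (hi : i ≠ 0) (him : i < m) :
    relHilb m q (i * q) = 2 :=
  (relHilb_le_two hq _).antisymm <|
    (two_le_relHilb_iff hq).2 ⟨i, Finset.mem_Icc.2 ⟨by omega, by omega⟩, rfl⟩

theorem relHilb_add_one_lt_two (hq : 2 ≤ q) : relHilb m q (q + 1) < 2 := by
  rw [← not_le, two_le_relHilb_iff (by omega)]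
  rintro ⟨i, -, hi⟩
  have : q ∣ 1 := (Nat.dvd_add_right dvd_rfl).1 ⟨i, by rw [← hi, mul_comm]⟩
  exact absurd (Nat.le_of_dvd one_pos this) (by omega)

theorem not_unimodal_relHilb (hm : 3 ≤ m) (hq : 2 ≤ q) : ¬ Unimodal (relHilb m q) := fun h => by
  have hmin := h.min_le (i := 1 * q) (j := q + 1) (l := 2 * q) (by omega) (by omega)
  rw [relHilb_mul_eq_two (by omega) one_ne_zero (by omega),
    relHilb_mul_eq_two (by omega) two_ne_zero (by omega), min_self] at hmin
  exact hmin.not_gt (relHilb_add_one_lt_two hq)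

theorem conjHilb_relHilb (hm : 2 ≤ m) (hq : q ≠ 0) {D : ℕ} (hD : 2 ≤ D) :
    conjHilb (relHilb m q) D = {m * q + 1, m - 1} := by
  have hone : {d | 1 ≤ relHilb m q d} = Set.Iic (m * q) := Set.ext fun _ => one_le_relHilb_iff
  have htwo : {d | 2 ≤ relHilb m q d} = (· * q) '' (Finset.Icc 1 (m - 1)) :=
    Set.ext fun _ => two_le_relHilb_iff hq
  have hcard : ((· * q) '' (Finset.Icc 1 (m - 1) : Set ℕ)).ncard = m - 1 := by
    rw [Set.ncard_image_of_injective _ fun i j => Nat.eq_of_mul_eq_mul_right (by omega),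
      Set.ncard_coe_finset, Nat.card_Icc, add_tsub_cancel_right]
  rw [conjHilb_eq_of_forall_le (relHilb_le_two hq) hD, conjHilb,
    show Multiset.range 2 = {0, 1} from rfl]
  simp only [Multiset.insert_eq_cons, Multiset.map_cons, Multiset.map_singleton, zero_add, hone,
    one_add_one_eq_two, htwo, hcard, Set.ncard_Iic_nat]
  exact Multiset.filter_eq_self.2 (by simp; omega)

theorem finrank_gradedPiece_relCoinvariants (R : Type*) [CommRing R] [Nontrivial R] (hm : m ≠ 0)
    (hq : q ≠ 0) (d : ℕ) :
    Module.finrank R (gradedPiece (branchIdeal R m (m * q)) ![q, 1] d) = relHilb m q d := by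
  rw [finrank_gradedPiece_branchIdeal hm (mul_ne_zero hm hq) (by simp), relHilb]
  congr 1
  simp [Finset.filter_eq', apply_ite]

variable {K : Type*} [Field K]

theorem not_isSL_relCoinvariants (hm : 3 ≤ m) (hq : 2 ≤ q)
    (ℓ : MvPolynomial (Fin 2) K ⧸ branchIdeal K m (m * q)) :
    ¬ IsSL (gradedPiece (branchIdeal K m (m * q)) ![q, 1]) ℓ := fun hℓ => by
  have hN : m * q ≠ 0 := mul_ne_zero (by omega) (by omega)
  have hrank {i : ℕ} (hi : i ≠ 0) (him : i < m) :
      Module.finrank K (gradedPiece (branchIdeal K m (m * q)) ![q, 1] (i * q)) = 2 := by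
    rw [finrank_gradedPiece_relCoinvariants K (by omega) (by omega),
      relHilb_mul_eq_two (by omega) hi him]
  have hq1 := hrank one_ne_zero (by omega)
  have hq2 := hrank two_ne_zero (by omega)
  rw [one_mul] at hq1
  rw [two_mul] at hq2
  have : Module.Finite K (gradedPiece (branchIdeal K m (m * q)) ![q, 1] q) :=
    Module.finite_of_finrank_pos (by omega)
  have hkill : ℓ ^ q * branchVar K m (m * q) 0 = 0 := by
    obtain ⟨r, rfl⟩ := Nat.exists_eq_add_of_le' hq
    linear_combination ℓ ^ (r + 1) * branchVar_zero_mul_of_mem_gradedPiece_one (by simp) hℓ.1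
  have hne : branchPow K m (m * q) ⟨0, 1⟩ ≠ 0 :=
    (linearIndepOn_branchPow (by omega) hN).ne_zero (by simp; omega)
  rw [branchPow, pow_one] at hne
  exact hne (hℓ.eq_zero_of_pow_mul_eq_zero (i := q) (by omega)
    (branchVar_mem_gradedPiece (w := ![q, 1]) 0) hkill)

theorem isJordanTypeOf_relCoinvariants (hm : 2 ≤ m) (hq : 2 ≤ q) :
    IsJordanTypeOf (LinearMap.mulLeft K (branchVar K m (m * q) 0 + branchVar K m (m * q) 1))
      {m * q + 1, m - 1} :=
  isJordanTypeOf_mulLeft_add branchVar_zero_mul_one branchVar_zero_pow hm (by nlinarith)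
    span_branchVar_pow_eq_top (finrank_branchQuotient (by omega) (by nlinarith))

theorem relCoinvariants_Gmmn_general
    (m n : ℕ) (hm : 3 ≤ m) (hn : 3 ≤ n)
    (I : Ideal (MvPolynomial (Fin 2) K))
    (hI : I = Ideal.span {X 0 ^ m - X 1 ^ (m * (n - 1)), X 0 * X 1})
    (𝒜 : ℕ → Submodule K (MvPolynomial (Fin 2) K ⧸ I))
    (h𝒜 : ∀ d : ℕ, 𝒜 d = Submodule.span K
      ((Ideal.Quotient.mk I) '' {f | f.IsWeightedHomogeneous ![n - 1, 1] d})) :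
    (∀ d : ℕ, Module.finrank K (𝒜 d) =
      (if d ≤ m * (n - 1) then 1 else 0) +
        ((Finset.Icc 1 (m - 1)).filter (fun i => i * (n - 1) = d)).card) ∧
    ¬ Unimodal (fun d => Module.finrank K (𝒜 d)) ∧
    (¬ ∃ ℓ, IsSL 𝒜 ℓ) ∧
    (∃ ℓ ∈ (⨆ i : ℕ, 𝒜 (i + 1) : Submodule K (MvPolynomial (Fin 2) K ⧸ I)),
      IsJordanTypeOf (LinearMap.mulLeft K ℓ)
        (conjHilb (fun d => Module.finrank K (𝒜 d))
          (Module.finrank K (MvPolynomial (Fin 2) K ⧸ I)))) := by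
  obtain ⟨q, rfl⟩ := Nat.exists_eq_add_of_le' (one_le_two.trans (Nat.le_of_succ_le hn))
  rw [Nat.add_sub_cancel] at hI h𝒜 ⊢
  have hq2 : 2 ≤ q := by omega
  obtain rfl : I = branchIdeal K m (m * q) := hI
  have hgraded : 𝒜 = gradedPiece (branchIdeal K m (m * q)) ![q, 1] :=
    funext fun d => by rw [h𝒜, gradedPiece_eq_span]
  have hrank := finrank_gradedPiece_relCoinvariants K (m := m) (q := q) (by omega) (by omega)
  have hdim := finrank_branchQuotient (R := K) (m := m) (N := m * q) (by omega) (by nlinarith)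
  rw [hgraded, funext hrank, conjHilb_relHilb (by omega) (by omega) (by omega)]
  exact ⟨hrank, not_unimodal_relHilb hm hq2, fun ⟨ℓ, hℓ⟩ => not_isSL_relCoinvariants hm hq2 ℓ hℓ,
    _, branchVar_add_mem_iSup_gradedPiece (by simp [Fin.forall_fin_two]; omega),
    isJordanTypeOf_relCoinvariants (by omega) hq2⟩

end RelativeCoinvariants

/-- Let `m, n ≥ 3` and let `A = ℂ[a,b]/(a^m − b^{m(n−1)}, ab)` be graded with
weights `w(a) = n − 1`, `w(b) = 1` (this is the relative coinvariant ring of the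
parabolic subgroup `G(m,m,n−1)` inside the complex reflection group `G(m,m,n)`).
Then the Hilbert polynomial of `A` is
`p(A,t) = Σ_{i=0}^{m(n−1)} t^i + Σ_{i=1}^{m−1} t^{i(n−1)}`; in particular `H(A)`
is not unimodal and `A` is not strong Lefschetz.  Nevertheless `A` has an
element of strong Lefschetz Jordan type. -/
theorem relCoinvariants_Gmmn
    (m n : ℕ) (hm : 3 ≤ m) (hn : 3 ≤ n)
    (I : Ideal (MvPolynomial (Fin 2) ℂ))
    (hI : I = Ideal.span {X 0 ^ m - X 1 ^ (m * (n - 1)), X 0 * X 1})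
    (𝒜 : ℕ → Submodule ℂ (MvPolynomial (Fin 2) ℂ ⧸ I))
    (h𝒜 : ∀ d : ℕ, 𝒜 d = Submodule.span ℂ
      ((Ideal.Quotient.mk I) '' {f | f.IsWeightedHomogeneous ![n - 1, 1] d})) :
    (∀ d : ℕ, Module.finrank ℂ (𝒜 d) =
      (if d ≤ m * (n - 1) then 1 else 0) +
        ((Finset.Icc 1 (m - 1)).filter (fun i => i * (n - 1) = d)).card) ∧
    ¬ Unimodal (fun d => Module.finrank ℂ (𝒜 d)) ∧
    (¬ ∃ ℓ, IsSL 𝒜 ℓ) ∧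
    (∃ ℓ ∈ (⨆ i : ℕ, 𝒜 (i + 1) : Submodule ℂ (MvPolynomial (Fin 2) ℂ ⧸ I)),
      IsJordanTypeOf (LinearMap.mulLeft ℂ ℓ)
        (conjHilb (fun d => Module.finrank ℂ (𝒜 d))
          (Module.finrank ℂ (MvPolynomial (Fin 2) ℂ ⧸ I)))) := by
  exact relCoinvariants_Gmmn_general m n hm hn I hI 𝒜 h𝒜
end

section
/- Let k be a field of characteristic 0 and let A = k[z_1,z_2]/(z_1^3 − 3z_1z_2, z_2^3) be graded with weights w(z_1) = 1 and w(z_2) = 2. Then dim_k A = 9, the Hilbert function is H(A) = (1,1,2,1,2,1,1) (non-unimodal, so A is not strong Lefschetz), and the non-homogeneous element ℓ = z_1 + z_2 ∈ m_A has Jordan type P_ℓ = (7,2) = H(A)^∨; i.e., ℓ has strong Lefschetz Jordan type. -/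
open MvPolynomial

universe u

section JordanStrings

variable {ι R M : Type*} [Ring R] [AddCommGroup M] [Module R M]

/-- Apply to a vanishing combination the power of `f` that carries its terms farthest from the end
of their string to that end: the terms nearer to the end die. -/
lemma linearIndependent_strings_of_ends [Finite ι] (f : M →ₗ[R] M) {u : ι → M} {n : ι → ℕ}
    (hzero : ∀ i, (f ^ n i) (u i) = 0)
    (hends : LinearIndependent R fun i => (f ^ (n i - 1)) (u i)) :
    LinearIndependent R fun p : Σ i, Fin (n i) => (f ^ (p.2 : ℕ)) (u p.1) := by
  classical
  have := Fintype.ofFinite ι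
  rw [Fintype.linearIndependent_iff]
  intro g hg
  by_contra! ⟨q, hq⟩
  obtain ⟨⟨i, a⟩, hne, hmax⟩ := Finset.exists_max_image {p | g p ≠ 0}
    (fun p => n p.1 - 1 - (p.2 : ℕ)) ⟨q, by simpa using hq⟩
  simp only [Finset.mem_filter, Finset.mem_univ, true_and] at hne hmax
  obtain ⟨t, ht⟩ : ∃ t, t = n i - 1 - a := ⟨_, rfl⟩
  have hterm (p : Σ i, Fin (n i)) : (f ^ t) (g p • (f ^ (p.2 : ℕ)) (u p.1)) =
      (if t + p.2 + 1 = n p.1 then g p else 0) • (f ^ (n p.1 - 1)) (u p.1) := by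
    rw [map_smul, ← Module.End.mul_apply, ← pow_add]
    split_ifs with hp
    · congr 3
      omega
    · rw [zero_smul]
      by_cases hgp : g p = 0
      · rw [hgp, zero_smul]
      · have := hmax p hgp
        rw [Module.End.pow_map_zero_of_le (by omega) (hzero p.1), smul_zero]
  have hsum := congrArg (f ^ t) hg
  simp only [map_sum, hterm, map_zero, Fintype.sum_sigma, ← Finset.sum_smul] at hsum
  have hcoeff := Fintype.linearIndependent_iff.1 hends _ hsum i
  rw [Finset.sum_eq_single a (fun b _ hb => if_neg fun h => hb (Fin.ext (by omega))) (by simp),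
    if_pos (by omega)] at hcoeff
  exact hne hcoeff

lemma range_pow_eq_span_strings (f : M →ₗ[R] M) {u : ι → M} {n : ι → ℕ}
    (hzero : ∀ i, (f ^ n i) (u i) = 0)
    (hspan : Submodule.span R
      (Set.range fun p : Σ i, Fin (n i) => (f ^ (p.2 : ℕ)) (u p.1)) = ⊤) (j : ℕ) :
    LinearMap.range (f ^ j) = Submodule.span R
      (Set.range fun p : Σ i, Fin (n i - j) => (f ^ (j + p.2 : ℕ)) (u p.1)) := by
  apply le_antisymm
  · rw [LinearMap.range_eq_map, ← hspan, Submodule.map_span, Submodule.span_le]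
    rintro _ ⟨_, ⟨⟨i, a⟩, rfl⟩, rfl⟩
    rw [← Module.End.mul_apply, ← pow_add]
    by_cases ha : (a : ℕ) < n i - j
    · exact Submodule.subset_span ⟨⟨i, a, ha⟩, rfl⟩
    · have : n i ≤ j + a := by omega
      rw [Module.End.pow_map_zero_of_le this (hzero i)]
      exact Submodule.zero_mem _
  · rw [Submodule.span_le]
    rintro _ ⟨⟨i, a⟩, rfl⟩
    exact ⟨(f ^ (a : ℕ)) (u i), by rw [← Module.End.mul_apply, ← pow_add]⟩

lemma isJordanTypeOf_of_linearIndependent_ends {k V : Type*} [Fintype ι] [Field k]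
    [AddCommGroup V] [Module k V] [FiniteDimensional k V] (f : V →ₗ[k] V) {u : ι → V} {n : ι → ℕ}
    (hzero : ∀ i, (f ^ n i) (u i) = 0)
    (hends : LinearIndependent k fun i => (f ^ (n i - 1)) (u i))
    (hcard : ∑ i, n i = Module.finrank k V) :
    IsJordanTypeOf f (Finset.univ.val.map n) := by
  have hind := linearIndependent_strings_of_ends f hzero hends
  have hspan := hind.span_eq_top_of_card_eq_finrank' (by simpa using hcard)
  refine ⟨fun p hp => ?_, fun j => ?_⟩
  · obtain ⟨i, -, rfl⟩ := Multiset.mem_map.1 hp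
    refine Nat.pos_of_ne_zero fun hi => hends.ne_zero i ?_
    simpa [hi] using hzero i
  · let shift (p : Σ i, Fin (n i - j)) : Σ i, Fin (n i) :=
      ⟨p.1, ⟨j + p.2, by omega⟩⟩
    have hshift : Function.Injective shift := by
      rintro ⟨i, a⟩ ⟨i', a'⟩ h
      obtain rfl : i = i' := congrArg Sigma.fst h
      simpa [shift, Fin.ext_iff] using h
    calc Module.finrank k (LinearMap.range (f ^ j))
      _ = Fintype.card (Σ i, Fin (n i - j)) := by
          rw [range_pow_eq_span_strings f hzero hspan j]
          exact finrank_span_eq_card (hind.comp shift hshift)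
      _ = ((Finset.univ.val.map n).map fun p => p - j).sum := by simp

end JordanStrings

lemma not_unimodal_of_valley {H : ℕ → ℕ} {a b c : ℕ} (hab : a ≤ b) (hbc : b ≤ c)
    (ha : H b < H a) (hc : H b < H c) : ¬ Unimodal H := by
  rintro ⟨m, hup, hdown⟩
  rcases le_total b m with hm | hm
  · exact ha.not_ge (hup a b hab hm)
  · exact hc.not_ge (hdown b c hm hbc)

section StrongLefschetz

variable {k A : Type*} [Field k] [CommRing A] [Algebra k A] [Module.Finite k A]
  {𝒜 : ℕ → Submodule k A} {ℓ : A}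

/-- Multiplication by `ℓ ^ (c - a)` factors through the piece of degree `b`. -/
lemma IsSL.min_finrank_le (h : IsSL 𝒜 ℓ) {a b c : ℕ} (hab : a ≤ b) (hbc : b ≤ c) :
    min (Module.finrank k (𝒜 a)) (Module.finrank k (𝒜 c)) ≤ Module.finrank k (𝒜 b) := by
  obtain ⟨i, rfl⟩ := Nat.exists_eq_add_of_le hab
  obtain ⟨j, rfl⟩ := Nat.exists_eq_add_of_le hbc
  have hfactor : LinearMap.mulLeft k (ℓ ^ (i + j)) =
      LinearMap.mulLeft k (ℓ ^ j) ∘ₗ LinearMap.mulLeft k (ℓ ^ i) := by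
    rw [← LinearMap.mulLeft_mul, ← pow_add, add_comm]
  calc min (Module.finrank k (𝒜 a)) (Module.finrank k (𝒜 (a + i + j)))
    _ = Module.finrank k (((𝒜 a).map (LinearMap.mulLeft k (ℓ ^ i))).map
          (LinearMap.mulLeft k (ℓ ^ j))) := by
        rw [add_assoc, ← h.2 a (i + j), hfactor, Submodule.map_comp]
    _ ≤ Module.finrank k ((𝒜 a).map (LinearMap.mulLeft k (ℓ ^ i))) :=
        Submodule.finrank_map_le _ _
    _ ≤ Module.finrank k (𝒜 (a + i)) := (h.2 a i).trans_le (min_le_right _ _)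

lemma IsSL.unimodal (h : IsSL 𝒜 ℓ) : Unimodal fun d => Module.finrank k (𝒜 d) := by
  obtain ⟨-, ⟨⟨c, rfl⟩, hc⟩⟩ := BddAbove.exists_isGreatest_of_nonempty
    (X := ℕ) (S := Set.range fun d => Module.finrank k (𝒜 d))
    ⟨Module.finrank k A, by rintro _ ⟨d, rfl⟩; exact Submodule.finrank_le _⟩
    (Set.range_nonempty _)
  have hmax (d : ℕ) : Module.finrank k (𝒜 d) ≤ Module.finrank k (𝒜 c) := hc ⟨d, rfl⟩
  refine ⟨c, fun i j hij hjc => ?_, fun i j hci hij => ?_⟩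
  · simpa only [min_eq_left (hmax i)] using h.min_finrank_le hij hjc
  · simpa only [min_eq_right (hmax j)] using h.min_finrank_le hci hij

end StrongLefschetz

lemma conjHilb_eq_of_eq_zero {H : ℕ → ℕ} {N : ℕ} (hH : ∀ d, N ≤ d → H d = 0) (n : ℕ) :
    conjHilb H n = ((Multiset.range n).map fun i =>
      ((Finset.range N).filter fun d => i + 1 ≤ H d).card).filter (fun c => 0 < c) := by
  have hset (i : ℕ) : {d | i + 1 ≤ H d} = ((Finset.range N).filter fun d => i + 1 ≤ H d) := by
    ext d
    have := hH d
    grind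
  simp only [conjHilb, hset, Set.ncard_coe_finset]

section GeneralPolynomial

variable {R : Type*} [CommRing R]

lemma span_mk_image_isWeightedHomogeneous {σ M : Type*} [AddCommMonoid M]
    (I : Ideal (MvPolynomial σ R)) (w : σ → M) (d : M) :
    Submodule.span R (Ideal.Quotient.mk I '' {f | f.IsWeightedHomogeneous w d}) =
      Submodule.span R
        ((fun m => Ideal.Quotient.mk I (monomial m 1)) '' {m | Finsupp.weight w m = d}) := by
  have hpiece : weightedHomogeneousSubmodule R w d = Submodule.span R
      ((fun m => monomial m (1 : R)) '' {m | Finsupp.weight w m = d}) := by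
    rw [weightedHomogeneousSubmodule_eq_finsupp_supported]
    exact AddMonoidAlgebra.supported_eq_span_single R _
  calc Submodule.span R (Ideal.Quotient.mk I '' {f | f.IsWeightedHomogeneous w d})
    _ = (weightedHomogeneousSubmodule R w d).map (Ideal.Quotient.mkₐ R I).toLinearMap := by
        rw [← Submodule.span_eq (weightedHomogeneousSubmodule R w d), Submodule.map_span]
        rfl
    _ = Submodule.span R
        ((fun m => Ideal.Quotient.mk I (monomial m 1)) '' {m | Finsupp.weight w m = d}) := by
        rw [hpiece, Submodule.map_span, Set.image_image]
        rfl

lemma linearIndependent_root_pow {g : Polynomial R} (hg : g.Monic) {n : ℕ}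
    (hn : g.natDegree = n) :
    LinearIndependent R fun i : Fin n => AdjoinRoot.root g ^ (i : ℕ) := by
  subst hn
  have h := (AdjoinRoot.powerBasis' hg).basis.linearIndependent
  rw [PowerBasis.coe_basis] at h
  exact h

lemma linearIndependent_root_pow_mul_root_pow {g : Polynomial R}
    {h : Polynomial (AdjoinRoot g)} (hg : g.Monic) (hh : h.Monic) {m n : ℕ}
    (hm : g.natDegree = m) (hn : h.natDegree = n) :
    LinearIndependent R fun p : Fin n × Fin m => AdjoinRoot.root h ^ (p.1 : ℕ) *
      algebraMap (AdjoinRoot g) (AdjoinRoot h) (AdjoinRoot.root g) ^ (p.2 : ℕ) := by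
  have hprod := (linearIndependent_smul (linearIndependent_root_pow hg hm)
    (linearIndependent_root_pow hh hn)).comp _ (Equiv.prodComm (Fin n) (Fin m)).injective
  simpa only [Function.comp_def, Equiv.prodComm_apply, Prod.fst_swap, Prod.snd_swap,
    Algebra.smul_def, map_pow, mul_comm] using hprod

end GeneralPolynomial

/-- The rewriting rule `x³ = c x y` preserves weights. -/
lemma pow_mul_pow_mem_span {R A : Type*} [CommRing R] [CommRing A] [Algebra R A] {c : R}
    {x y : A} (hx : x ^ 3 = algebraMap R A c * (x * y)) (hy : y ^ 3 = 0) (a b : ℕ) :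
    x ^ a * y ^ b ∈ Submodule.span R
      ((fun p : Fin 3 × Fin 3 => x ^ (p.1 : ℕ) * y ^ (p.2 : ℕ)) ''
        {p | (p.1 + 2 * p.2 : ℕ) = a + 2 * b}) := by
  induction a using Nat.strong_induction_on generalizing b with
  | _ a ih =>
    rcases lt_or_ge a 3 with ha | ha
    · rcases lt_or_ge b 3 with hb | hb
      · exact Submodule.subset_span ⟨(⟨a, ha⟩, ⟨b, hb⟩), rfl, rfl⟩
      · rw [pow_eq_zero_of_le hb hy, mul_zero]
        exact Submodule.zero_mem _
    · obtain ⟨r, rfl⟩ := Nat.exists_eq_add_of_le ha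
      have hrewrite : x ^ (3 + r) * y ^ b = c • (x ^ (1 + r) * y ^ (b + 1)) := by
        rw [Algebra.smul_def]
        linear_combination (x ^ r * y ^ b) * hx
      have hweight : 3 + r + 2 * b = 1 + r + 2 * (b + 1) := by ring
      rw [hrewrite, hweight]
      exact Submodule.smul_mem _ _ (ih (1 + r) (by omega) (b + 1))

lemma exists_linearIndependent_pow_mul_pow {R : Type u} [CommRing R] [Nontrivial R] (c : R) :
    ∃ (T : Type u) (_ : CommRing T) (_ : Algebra R T) (s t : T),
      s ^ 3 = algebraMap R T c * (s * t) ∧ t ^ 3 = 0 ∧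
      LinearIndependent R fun p : Fin 3 × Fin 3 => s ^ (p.1 : ℕ) * t ^ (p.2 : ℕ) := by
  let g : Polynomial R := Polynomial.X ^ 3
  have hg : g.Monic := Polynomial.monic_X_pow 3
  have hgdeg : g.natDegree = 3 := Polynomial.natDegree_X_pow 3
  have : Nontrivial (AdjoinRoot g) := (linearIndependent_root_pow hg hgdeg).nontrivial
  let h : Polynomial (AdjoinRoot g) :=
    Polynomial.X ^ 3 - Polynomial.C (algebraMap R _ c * AdjoinRoot.root g) * Polynomial.X
  have hh : h.Monic := by unfold h; monicity!
  have hhdeg : h.natDegree = 3 := by unfold h; compute_degree!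
  refine ⟨AdjoinRoot h, inferInstance, inferInstance, AdjoinRoot.root h,
    algebraMap _ _ (AdjoinRoot.root g), ?_, ?_,
    linearIndependent_root_pow_mul_root_pow hg hh hgdeg hhdeg⟩
  · have hroot : Polynomial.aeval (AdjoinRoot.root h) (Polynomial.X ^ 3 -
        Polynomial.C (algebraMap R _ c * AdjoinRoot.root g) * Polynomial.X) = 0 :=
      AdjoinRoot.eval₂_root h
    rw [map_sub, map_pow, map_mul, Polynomial.aeval_X, Polynomial.aeval_C, map_mul,
      ← IsScalarTower.algebraMap_apply] at hroot
    linear_combination hroot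
  · have hroot := AdjoinRoot.eval₂_root g
    rw [Polynomial.eval₂_X_pow] at hroot
    rw [← map_pow, hroot, map_zero]

section JordanBasis

variable {A : Type*} [CommRing A] {γ x y : A}

lemma add_pow_six_of_relations (hx : x ^ 3 = γ * (x * y)) (hy : y ^ 3 = 0) :
    (x + y) ^ 6 = γ ^ 2 * (x ^ 2 * y ^ 2) := by
  linear_combination (x ^ 3 + γ * x * y + 6 * x ^ 2 * y + 6 * γ * y ^ 2 + 15 * x * y ^ 2) * hx +
    (6 * γ ^ 2 * x + 15 * γ * x ^ 2 + 20 * x ^ 3 + 15 * x ^ 2 * y + 6 * x * y ^ 2 + y ^ 3) * hy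

lemma add_pow_seven_of_relations (hx : x ^ 3 = γ * (x * y)) (hy : y ^ 3 = 0) :
    (x + y) ^ 7 = 0 := by
  rw [pow_succ, add_pow_six_of_relations hx hy]
  linear_combination γ ^ 2 * y ^ 2 * hx + (γ ^ 3 * x + γ ^ 2 * x ^ 2) * hy

/-- The generator of the short Jordan string: `x² - γ y` is annihilated by `x`, and the last term
corrects `γ (x² - γ y)` so that `(x + y)²` annihilates the sum. -/
def shortString (γ x y : A) : A := γ * x ^ 2 - γ ^ 2 * y - x ^ 2 * y

lemma add_mul_shortString (hx : x ^ 3 = γ * (x * y)) :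
    (x + y) * shortString γ x y =
      γ * (x ^ 2 * y) - γ ^ 2 * y ^ 2 - γ * (x * y ^ 2) - x ^ 2 * y ^ 2 := by
  rw [shortString]
  linear_combination (γ - y) * hx

lemma add_sq_mul_shortString (hx : x ^ 3 = γ * (x * y)) (hy : y ^ 3 = 0) :
    (x + y) ^ 2 * shortString γ x y = 0 := by
  rw [sq, mul_assoc, add_mul_shortString hx]
  linear_combination (γ * y - y ^ 2) * hx - (γ ^ 2 + 2 * γ * x + x ^ 2) * hy

variable {k : Type*} [Field k] [Algebra k A] {c : k}

lemma linearIndependent_string_ends (hc : c ≠ 0) (hx : x ^ 3 = algebraMap k A c * (x * y))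
    (hy : y ^ 3 = 0) (e : Module.Basis (Fin 3 × Fin 3) k A)
    (he : ∀ p, e p = x ^ (p.1 : ℕ) * y ^ (p.2 : ℕ)) :
    LinearIndependent k ![(x + y) ^ 6, (x + y) * shortString (algebraMap k A c) x y] := by
  have hlong : (x + y) ^ 6 = c ^ 2 • e (2, 2) := by
    simp [add_pow_six_of_relations hx hy, he, Algebra.smul_def]
  have hshort : (x + y) * shortString (algebraMap k A c) x y =
      c • e (2, 1) - c ^ 2 • e (0, 2) - c • e (1, 2) - e (2, 2) := by
    simp [add_mul_shortString hx, he, Algebra.smul_def]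
  rw [LinearIndependent.pair_iff, hlong, hshort]
  intro r s hrs
  have hcoord (p : Fin 3 × Fin 3) := congrArg (fun a => e.repr a p) hrs
  have hs : s = 0 := by simpa [Finsupp.single_apply, hc] using hcoord (2, 1)
  have hr : r = 0 := by simpa [Finsupp.single_apply, hc, hs] using hcoord (2, 2)
  exact ⟨hr, hs⟩

lemma isJordanTypeOf_mulLeft_add_s17 (hc : c ≠ 0) (hx : x ^ 3 = algebraMap k A c * (x * y))
    (hy : y ^ 3 = 0) (e : Module.Basis (Fin 3 × Fin 3) k A)
    (he : ∀ p, e p = x ^ (p.1 : ℕ) * y ^ (p.2 : ℕ)) :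
    IsJordanTypeOf (LinearMap.mulLeft k (x + y)) {7, 2} := by
  have : Module.Finite k A := .of_basis e
  let n : Fin 2 → ℕ := ![7, 2]
  let u : Fin 2 → A := ![1, shortString (algebraMap k A c) x y]
  have hzero (i : Fin 2) : (LinearMap.mulLeft k (x + y) ^ n i) (u i) = 0 := by
    fin_cases i
    · simp [n, u, LinearMap.pow_mulLeft, add_pow_seven_of_relations hx hy]
    · simp [n, u, LinearMap.pow_mulLeft, add_sq_mul_shortString hx hy]
  have hends : (fun i => (LinearMap.mulLeft k (x + y) ^ (n i - 1)) (u i)) =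
      ![(x + y) ^ 6, (x + y) * shortString (algebraMap k A c) x y] := by
    ext i
    fin_cases i <;> simp [n, u, LinearMap.pow_mulLeft]
  have hcard : ∑ i, n i = Module.finrank k A := by
    simp [n, Module.finrank_eq_card_basis e]
  refine isJordanTypeOf_of_linearIndependent_ends _ hzero ?_ hcard
  rw [hends]
  exact linearIndependent_string_ends hc hx hy e he

end JordanBasis

lemma weight_one_two (m : Fin 2 →₀ ℕ) : Finsupp.weight ![1, 2] m = m 0 + 2 * m 1 := by
  rw [Finsupp.weight_apply, Finsupp.sum_fintype _ _ (by simp), Fin.sum_univ_two]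
  simp [mul_comm]

/-- The ideal `(z₁³ - c z₁ z₂, z₂³)`, with the coefficient `3` of the theorem replaced by a
parameter. -/
noncomputable def cubicIdeal {R : Type*} [CommRing R] (c : R) : Ideal (MvPolynomial (Fin 2) R) :=
  Ideal.span {X 0 ^ 3 - C c * (X 0 * X 1), X 1 ^ 3}

/-- The algebra `A = R[z₁, z₂] / (z₁³ - c z₁ z₂, z₂³)`. -/
abbrev CubicAlgebra {R : Type u} [CommRing R] (c : R) : Type u :=
  MvPolynomial (Fin 2) R ⧸ cubicIdeal c

namespace CubicAlgebra

variable {R : Type*} [CommRing R] (c : R)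

/-- The class of `z₁`. -/
noncomputable def x : CubicAlgebra c := Ideal.Quotient.mk (cubicIdeal c) (X 0)

/-- The class of `z₂`. -/
noncomputable def y : CubicAlgebra c := Ideal.Quotient.mk (cubicIdeal c) (X 1)

lemma x_pow_three : x c ^ 3 = algebraMap R (CubicAlgebra c) c * (x c * y c) :=
  Ideal.Quotient.eq.2 (Ideal.subset_span (Set.mem_insert _ _))

lemma y_pow_three : y c ^ 3 = 0 :=
  Ideal.Quotient.eq_zero_iff_mem.2 (Ideal.subset_span (Set.mem_insert_of_mem _ rfl))

section Lift

variable {c} {A : Type*} [CommRing A] [Algebra R A] {s t : A}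

/-- The universal property of the presentation: the homomorphism sending `x` to `s` and `y` to
`t`. -/
noncomputable def lift (hs : s ^ 3 = algebraMap R A c * (s * t)) (ht : t ^ 3 = 0) :
    CubicAlgebra c →ₐ[R] A :=
  Ideal.Quotient.liftₐ (cubicIdeal c) (aeval ![s, t]) fun f hf => by
    suffices cubicIdeal c ≤ RingHom.ker (aeval (R := R) ![s, t]) from this hf
    rw [cubicIdeal, Ideal.span_le]
    rintro _ (rfl | rfl) <;> simp [hs, ht]

lemma lift_x (hs : s ^ 3 = algebraMap R A c * (s * t)) (ht : t ^ 3 = 0) :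
    lift hs ht (x c) = s :=
  aeval_X _ _

lemma lift_y (hs : s ^ 3 = algebraMap R A c * (s * t)) (ht : t ^ 3 = 0) :
    lift hs ht (y c) = t :=
  aeval_X _ _

end Lift

lemma mk_monomial (m : Fin 2 →₀ ℕ) :
    Ideal.Quotient.mk (cubicIdeal c) (monomial m 1) = x c ^ m 0 * y c ^ m 1 := by
  rw [monomial_eq, Finsupp.prod_fintype _ _ (fun _ => pow_zero _), Fin.prod_univ_two, C_1,
    one_mul, map_mul, map_pow, map_pow, x, y]

/-- The homogeneous piece of degree `d` for the weights `(1, 2)`, in the form it has in the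
theorem: the span of the classes of the weighted homogeneous polynomials of degree `d`. -/
noncomputable def piece (d : ℕ) : Submodule R (CubicAlgebra c) :=
  Submodule.span R (Ideal.Quotient.mk (cubicIdeal c) '' {f | f.IsWeightedHomogeneous ![1, 2] d})

lemma span_range_pow_mul_pow : Submodule.span R
    (Set.range fun p : Fin 3 × Fin 3 => x c ^ (p.1 : ℕ) * y c ^ (p.2 : ℕ)) = ⊤ := by
  rw [eq_top_iff]
  rintro a -
  obtain ⟨f, rfl⟩ := Ideal.Quotient.mk_surjective a
  induction f using MvPolynomial.induction_on' with
  | monomial m r =>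
    have hmem := pow_mul_pow_mem_span (x_pow_three c) (y_pow_three c) (m 0) (m 1)
    have hsmul : monomial m r = r • monomial m 1 := by rw [smul_monomial, smul_eq_mul, mul_one]
    rw [hsmul, ← Ideal.Quotient.mkₐ_eq_mk R, map_smul, Ideal.Quotient.mkₐ_eq_mk, mk_monomial]
    exact Submodule.smul_mem _ _ (Submodule.span_mono (Set.image_subset_range _ _) hmem)
  | add f g hf hg => exact Submodule.add_mem _ hf hg

/-- Independence is inherited from the images in the tower of monic extensions `R[Y] / (Y³)` and
`X³ = c Y X`, where the monomials are products of power bases. -/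
lemma linearIndependent_pow_mul_pow [Nontrivial R] : LinearIndependent R
    fun p : Fin 3 × Fin 3 => x c ^ (p.1 : ℕ) * y c ^ (p.2 : ℕ) := by
  obtain ⟨T, _, _, s, t, hs, ht, hind⟩ := exists_linearIndependent_pow_mul_pow c
  refine LinearIndependent.of_comp (lift hs ht).toLinearMap ?_
  simpa only [Function.comp_def, AlgHom.toLinearMap_apply, map_mul, map_pow, lift_x, lift_y]
    using hind

/-- The basis of the monomials `xⁱ yʲ` with `i, j < 3`. -/
noncomputable def monomialBasis [Nontrivial R] :
    Module.Basis (Fin 3 × Fin 3) R (CubicAlgebra c) :=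
  .mk (linearIndependent_pow_mul_pow c) (span_range_pow_mul_pow c).ge

lemma monomialBasis_apply [Nontrivial R] (p : Fin 3 × Fin 3) :
    monomialBasis c p = x c ^ (p.1 : ℕ) * y c ^ (p.2 : ℕ) :=
  Module.Basis.mk_apply _ _ _

lemma finrank_eq_nine [Nontrivial R] : Module.finrank R (CubicAlgebra c) = 9 := by
  rw [Module.finrank_eq_card_basis (monomialBasis c)]
  rfl

lemma piece_eq_span_monomialBasis [Nontrivial R] (d : ℕ) :
    piece c d = Submodule.span R
      (monomialBasis c '' {p | (p.1 + 2 * p.2 : ℕ) = d}) := by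
  rw [piece, span_mk_image_isWeightedHomogeneous]
  simp only [mk_monomial, weight_one_two, funext (monomialBasis_apply c)]
  apply le_antisymm <;> rw [Submodule.span_le]
  · rintro _ ⟨m, rfl, rfl⟩
    exact pow_mul_pow_mem_span (x_pow_three c) (y_pow_three c) _ _
  · rintro _ ⟨p, rfl, rfl⟩
    exact Submodule.subset_span
      ⟨Finsupp.single 0 (p.1 : ℕ) + Finsupp.single 1 (p.2 : ℕ), by simp, by simp⟩

lemma finrank_piece_eq_card [Nontrivial R] (d : ℕ) : Module.finrank R (piece c d) =
    (Finset.univ.filter fun p : Fin 3 × Fin 3 => (p.1 + 2 * p.2 : ℕ) = d).card := by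
  rw [piece_eq_span_monomialBasis, Set.image_eq_range, ← Fintype.card_subtype]
  exact finrank_span_eq_card
    ((monomialBasis c).linearIndependent.comp _ Subtype.val_injective)

lemma finrank_piece [Nontrivial R] (d : ℕ) :
    Module.finrank R (piece c d) = [1, 1, 2, 1, 2, 1, 1].getD d 0 := by
  rw [finrank_piece_eq_card]
  rcases lt_or_ge d 7 with hd | hd
  · interval_cases d <;> decide
  · rw [List.getD_eq_default _ _ hd, Finset.card_eq_zero, Finset.filter_eq_empty_iff]
    omega

lemma mk_add_mem_iSup_piece :
    Ideal.Quotient.mk (cubicIdeal c) (X 0 + X 1) ∈ ⨆ i, piece c (i + 1) := by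
  have hX (i : Fin 2) : Ideal.Quotient.mk (cubicIdeal c) (X i) ∈ piece c (![1, 2] i) :=
    Submodule.subset_span ⟨X i, isWeightedHomogeneous_X R _ i, rfl⟩
  rw [map_add]
  exact Submodule.add_mem _ (Submodule.mem_iSup_of_mem 0 (hX 0))
    (Submodule.mem_iSup_of_mem 1 (hX 1))

end CubicAlgebra

theorem SLJT_example_z1z2_general
    {k : Type*} [Field k] {c : k} (hc : c ≠ 0)
    (I : Ideal (MvPolynomial (Fin 2) k))
    (hI : I = Ideal.span {X 0 ^ 3 - C c * (X 0 * X 1), X 1 ^ 3})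
    (𝒜 : ℕ → Submodule k (MvPolynomial (Fin 2) k ⧸ I))
    (h𝒜 : ∀ d : ℕ, 𝒜 d = Submodule.span k
      ((Ideal.Quotient.mk I) '' {f | f.IsWeightedHomogeneous ![1, 2] d})) :
    Module.finrank k (MvPolynomial (Fin 2) k ⧸ I) = 9 ∧
    (Module.finrank k (𝒜 0) = 1 ∧ Module.finrank k (𝒜 1) = 1 ∧
     Module.finrank k (𝒜 2) = 2 ∧ Module.finrank k (𝒜 3) = 1 ∧
     Module.finrank k (𝒜 4) = 2 ∧ Module.finrank k (𝒜 5) = 1 ∧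
     Module.finrank k (𝒜 6) = 1 ∧ ∀ d : ℕ, 7 ≤ d → Module.finrank k (𝒜 d) = 0) ∧
    ¬ Unimodal (fun d => Module.finrank k (𝒜 d)) ∧
    (¬ ∃ ℓ, IsSL 𝒜 ℓ) ∧
    (Ideal.Quotient.mk I (X 0 + X 1) ∈
      (⨆ i : ℕ, 𝒜 (i + 1) : Submodule k (MvPolynomial (Fin 2) k ⧸ I))) ∧
    IsJordanTypeOf (LinearMap.mulLeft k (Ideal.Quotient.mk I (X 0 + X 1)))
      ({7, 2} : Multiset ℕ) ∧
    conjHilb (fun d => Module.finrank k (𝒜 d)) 9 = ({7, 2} : Multiset ℕ) := by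
  obtain rfl : I = cubicIdeal c := hI
  obtain rfl : 𝒜 = CubicAlgebra.piece c := funext h𝒜
  have hdim := CubicAlgebra.finrank_eq_nine c
  have hfin : Module.Finite k (CubicAlgebra c) := .of_basis (CubicAlgebra.monomialBasis c)
  have hH : (fun d => Module.finrank k (CubicAlgebra.piece c d)) =
      fun d => [1, 1, 2, 1, 2, 1, 1].getD d 0 := funext (CubicAlgebra.finrank_piece c)
  have hnot : ¬ Unimodal fun d => Module.finrank k (CubicAlgebra.piece c d) := by
    rw [hH]
    exact not_unimodal_of_valley (a := 2) (b := 3) (c := 4) (by simp) (by simp) (by simp) (by simp)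
  refine ⟨hdim, ?_, hnot, fun ⟨_, hℓ⟩ => hnot hℓ.unimodal,
    CubicAlgebra.mk_add_mem_iSup_piece c, ?_, ?_⟩
  · simp +contextual [CubicAlgebra.finrank_piece]
  · rw [map_add]
    exact isJordanTypeOf_mulLeft_add_s17 hc (CubicAlgebra.x_pow_three c) (CubicAlgebra.y_pow_three c)
      (CubicAlgebra.monomialBasis c) (CubicAlgebra.monomialBasis_apply c)
  · rw [hH, conjHilb_eq_of_eq_zero (N := 7) fun d hd => List.getD_eq_default _ _ hd]
    decide

/-- Let `k` be a field of characteristic 0 and let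
`A = k[z₁,z₂]/(z₁³ − 3z₁z₂, z₂³)` be graded with weights `w(z₁) = 1`,
`w(z₂) = 2`.  Then `dim_k A = 9`, the Hilbert function is
`H(A) = (1,1,2,1,2,1,1)` (non-unimodal, so `A` is not strong Lefschetz), and
the non-homogeneous element `ℓ = z₁ + z₂ ∈ m_A` has Jordan type
`P_ℓ = (7,2) = H(A)^∨`; i.e. `ℓ` has strong Lefschetz Jordan type. -/
theorem SLJT_example_z1z2
    {k : Type} [Field k] [CharZero k]
    (I : Ideal (MvPolynomial (Fin 2) k))
    (hI : I = Ideal.span {X 0 ^ 3 - 3 * (X 0 * X 1), X 1 ^ 3})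
    (𝒜 : ℕ → Submodule k (MvPolynomial (Fin 2) k ⧸ I))
    (h𝒜 : ∀ d : ℕ, 𝒜 d = Submodule.span k
      ((Ideal.Quotient.mk I) '' {f | f.IsWeightedHomogeneous ![1, 2] d})) :
    Module.finrank k (MvPolynomial (Fin 2) k ⧸ I) = 9 ∧
    (Module.finrank k (𝒜 0) = 1 ∧ Module.finrank k (𝒜 1) = 1 ∧
     Module.finrank k (𝒜 2) = 2 ∧ Module.finrank k (𝒜 3) = 1 ∧
     Module.finrank k (𝒜 4) = 2 ∧ Module.finrank k (𝒜 5) = 1 ∧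
     Module.finrank k (𝒜 6) = 1 ∧ ∀ d : ℕ, 7 ≤ d → Module.finrank k (𝒜 d) = 0) ∧
    ¬ Unimodal (fun d => Module.finrank k (𝒜 d)) ∧
    (¬ ∃ ℓ, IsSL 𝒜 ℓ) ∧
    (Ideal.Quotient.mk I (X 0 + X 1) ∈
      (⨆ i : ℕ, 𝒜 (i + 1) : Submodule k (MvPolynomial (Fin 2) k ⧸ I))) ∧
    IsJordanTypeOf (LinearMap.mulLeft k (Ideal.Quotient.mk I (X 0 + X 1)))
      ({7, 2} : Multiset ℕ) ∧
    conjHilb (fun d => Module.finrank k (𝒜 d)) 9 = ({7, 2} : Multiset ℕ) := by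
  exact SLJT_example_z1z2_general (c := 3) three_ne_zero I (by rwa [map_ofNat]) 𝒜 h𝒜
end

section
/- Let k be a field of characteristic 0, let m, n ≥ 1, and in R = k[x_1,…,x_n] let e_i denote the i-th elementary symmetric polynomial in x_1,…,x_n and ê_i = e_i(x_1^m,…,x_n^m). Let A(m,n) = R^{S_n}/((ê_1,…,ê_n)·R^{S_n}) be the quotient of the subalgebra of symmetric polynomials by the ideal generated by ê_1,…,ê_n, graded by polynomial degree. Then dim_k A(m,n) = m^n and the Hilbert polynomial of A(m,n) is p(A(m,n),t) = Π_{i=1}^n (1 − t^{im})/(1 − t^i) = Π_{i=1}^n (1 + t^i + t^{2i} + ⋯ + t^{(m−1)i}). -/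
/-!
Work over any commutative ring and order monomials lexicographically. The leading exponent of
`e ^ a = ∏ e_i ^ a_i` is the partition whose `j`-th part is `∑_{i ≥ j} a_i`, and `x_j ↦ x_j ^ m`
multiplies leading exponents by `m`. Hence `e ^ c * ê ^ q` is monic with the leading exponent of
`e ^ (c + m q)`. By division with remainder, every partition is obtained from exactly one pair
`(c, q)` with all `c_i < m`, so these products form a basis of the symmetric polynomials.

In this basis the ideal `(ê_1, …, ê_n)` is the span of the elements with `q ≠ 0`, and the symmetric
polynomials of degree `d` are the span of the elements with `∑ i c_i + m ∑ i q_i = d`. The quotient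
therefore has in degree `d` a basis indexed by the `c` with `∑ i c_i = d`.
-/

open MvPolynomial

set_option synthInstance.maxHeartbeats 1000000
set_option maxHeartbeats 2000000

/-- The `i`-th elementary symmetric polynomial evaluated at the `m`-th powers of
the variables: `ê_i = e_i(x₁^m, …, x_n^m)`. -/
noncomputable def esymmPow (k : Type) [Field k] (n m i : ℕ) : MvPolynomial (Fin n) k :=
  aeval (fun j : Fin n => (X j : MvPolynomial (Fin n) k) ^ m) (esymm (Fin n) k i)

/-- The ideal `(ê_1, …, ê_n)·R^{S_n}` of the algebra of symmetric polynomials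
`R^{S_n}`. -/
noncomputable def ehatIdeal (k : Type) [Field k] (n m : ℕ) :
    Ideal (symmetricSubalgebra (Fin n) k) :=
  Ideal.span {x : symmetricSubalgebra (Fin n) k |
    ∃ i ∈ Finset.Icc 1 n, (x : MvPolynomial (Fin n) k) = esymmPow k n m i}

/-- The relative coinvariant ring `A(m,n) = R^{S_n}/((ê_1,…,ê_n)·R^{S_n})` of
the symmetric group `S_n` inside the complex reflection group `G(m,1,n)`. -/
noncomputable abbrev Amn (k : Type) [Field k] (n m : ℕ) :=
  (symmetricSubalgebra (Fin n) k) ⧸ ehatIdeal k n m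

/-- The grading on `A(m,n)` by polynomial degree: the degree-`d` piece is
spanned by the images of the homogeneous degree-`d` symmetric polynomials. -/
noncomputable def AmnGrading (k : Type) [Field k] (n m d : ℕ) :
    Submodule k (Amn k n m) :=
  Submodule.span k ((Ideal.Quotient.mk (ehatIdeal k n m)) ''
    {x : symmetricSubalgebra (Fin n) k | ((x : MvPolynomial (Fin n) k)).IsHomogeneous d})

namespace RelativeCoinvariant

open AddMonoidAlgebra

/-! ### Families adapted to kernels and gradings -/

section LinearAlgebra

variable {ι R M : Type*}

lemma finrank_map_span_image_of_ker_eq {N : Type*} [Ring R] [StrongRankCondition R]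
    [AddCommGroup M] [Module R M] [AddCommGroup N] [Module R N]
    {b : ι → M} (hb : LinearIndependent R b) {f : M →ₗ[R] N} {s : Set ι}
    (hf : LinearMap.ker f = Submodule.span R (b '' s)) (t : Set ι) :
    Module.finrank R ((Submodule.span R (b '' t)).map f) = (t \ s).ncard := by
  have := nontrivial_of_invariantBasisNumber R
  have hspan : (Submodule.span R (b '' t)).map f =
      Submodule.span R (Set.range fun i : ↥(t \ s) => f (b i)) := by
    refine le_antisymm ?_ ?_
    · rw [Submodule.map_span_le]
      rintro _ ⟨i, hit, rfl⟩
      by_cases his : i ∈ s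
      · have : b i ∈ LinearMap.ker f := hf ▸ Submodule.subset_span ⟨i, his, rfl⟩
        rw [LinearMap.mem_ker.1 this]
        exact Submodule.zero_mem _
      · exact Submodule.subset_span ⟨⟨i, hit, his⟩, rfl⟩
    · rw [Submodule.span_le]
      rintro _ ⟨i, rfl⟩
      exact Submodule.mem_map_of_mem (Submodule.subset_span ⟨i, i.2.1, rfl⟩)
  have hind : LinearIndependent R fun i : ↥(t \ s) => f (b i) := by
    refine (hb.comp _ Subtype.val_injective).map ?_
    rw [hf, Set.range_comp, Subtype.range_coe]
    exact hb.disjoint_span_image Set.disjoint_sdiff_left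
  rw [hspan, Module.finrank, rank_span hind]
  exact Nat.card_range_of_injective hind.injective

lemma comap_homogeneousSubmodule_eq_span {σ : Type*} [CommSemiring R] [AddCommMonoid M] [Module R M]
    {f : M →ₗ[R] MvPolynomial σ R} (hf : Function.Injective f) {b : ι → M}
    (hb : Submodule.span R (Set.range b) = ⊤) {deg : ι → ℕ}
    (hdeg : ∀ i, (f (b i)).IsHomogeneous (deg i)) (d : ℕ) :
    (homogeneousSubmodule σ R d).comap f = Submodule.span R (b '' {i | deg i = d}) := by
  have hcomp : (⊤ : Submodule R M).map (homogeneousComponent d ∘ₗ f) ≤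
      (Submodule.span R (b '' {i | deg i = d})).map f := by
    rw [← hb, Submodule.map_span_le]
    rintro _ ⟨i, rfl⟩
    rw [LinearMap.comp_apply, homogeneousComponent_of_mem (hdeg i)]
    split_ifs with hi
    · exact Submodule.mem_map_of_mem (Submodule.subset_span ⟨i, hi.symm, rfl⟩)
    · exact Submodule.zero_mem _
  refine le_antisymm (fun x hx => ?_) ?_
  · have hfx : homogeneousComponent d (f x) = f x := by
      rw [homogeneousComponent_of_mem hx, if_pos rfl]
    obtain ⟨y, hy, hyx⟩ := hcomp ⟨x, Submodule.mem_top, hfx⟩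
    rwa [← hf hyx]
  · rw [Submodule.span_le]
    rintro _ ⟨i, rfl, rfl⟩
    exact hdeg i

end LinearAlgebra

/-! ### Leading exponents for the lexicographic order -/

section LeadingExponent

variable {ι σ R : Type*} [LinearOrder σ]

section CommSemiring

variable [CommSemiring R] {m : ℕ}

lemma supDegree_expand (hm : m ≠ 0) (p : MvPolynomial σ R) :
    supDegree toLex (expand m p) = toLex (m • ofLex (supDegree toLex p)) := by
  classical
  change (expand m p).support.sup toLex = m • p.support.sup toLex
  rw [support_expand p hm, Finset.sup_image, Finset.apply_sup_eq_sup_comp (m • ·)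
    (fun a b => (nsmul_right_mono m).map_sup a b) (smul_zero m)]
  rfl

lemma leadingCoeff_expand (hm : m ≠ 0) (p : MvPolynomial σ R) :
    leadingCoeff toLex (expand m p) = leadingCoeff toLex p := by
  rw [leadingCoeff_toLex, leadingCoeff_toLex, supDegree_expand hm, ofLex_toLex,
    coeff_expand_smul m hm]

lemma supDegree_smul_of_monic {p : MvPolynomial σ R} (hp : Monic toLex p) {r : R} (hr : r ≠ 0) :
    supDegree toLex (r • p) = supDegree toLex p := by
  rw [smul_eq_C_mul, hp.supDegree_mul_of_ne_zero_left toLex.injective toLex_add (by simpa using hr),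
    supDegree_toLex_C, zero_add]

lemma leadingCoeff_smul_of_monic {p : MvPolynomial σ R} (hp : Monic toLex p) (r : R) :
    leadingCoeff toLex (r • p) = r := by
  rw [smul_eq_C_mul, hp.leadingCoeff_mul_eq_left toLex.injective toLex_add, leadingCoeff_toLex_C]

end CommSemiring

variable [CommRing R]

lemma linearIndependent_of_monic {b : ι → MvPolynomial σ R}
    (hb : ∀ i, Monic toLex (b i)) (hinj : Function.Injective fun i => supDegree toLex (b i)) :
    LinearIndependent R b := by
  classical
  rw [linearIndependent_iff']
  intro s g hg i hi
  by_contra hgi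
  have hne : ∀ j ∈ s.filter (g · ≠ 0), g j ≠ 0 := fun j hj => (Finset.mem_filter.1 hj).2
  refine sum_ne_zero_of_injOn_supDegree (D := toLex) (s := s.filter (g · ≠ 0))
    (f := fun j => g j • b j) ⟨i, Finset.mem_filter.2 ⟨hi, hgi⟩⟩ (fun j hj hzero => hne j hj ?_)
    (fun j hj l hl h => hinj ?_) ?_
  · rw [← leadingCoeff_smul_of_monic (hb j) (g j), hzero, leadingCoeff_zero]
  · simpa only [Function.comp_apply, supDegree_smul_of_monic (hb j) (hne j hj),
      supDegree_smul_of_monic (hb l) (hne l hl)] using h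
  · rw [← hg]
    exact Finset.sum_filter_of_ne fun j _ hj h => hj (by rw [h, zero_smul])

/-- Induction on the leading exponent: subtracting a multiple of some `b i` lowers it. -/
lemma le_span_of_exists_monic_supDegree_eq [WellFoundedGT σ] {M : Submodule R (MvPolynomial σ R)}
    {b : ι → MvPolynomial σ R} (hbM : ∀ i, b i ∈ M) (hb : ∀ i, Monic toLex (b i))
    (hlead : ∀ p ∈ M, p ≠ 0 → ∃ i, supDegree toLex (b i) = supDegree toLex p) :
    M ≤ Submodule.span R (Set.range b) := by
  intro p hp
  induction hs : supDegree toLex p using WellFoundedLT.induction generalizing p with | _ s ih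
  subst hs
  obtain rfl | hp0 := eq_or_ne p 0
  · exact Submodule.zero_mem _
  obtain ⟨i, hi⟩ := hlead p hp hp0
  set r := leadingCoeff toLex p
  have hr0 : r ≠ 0 := (leadingCoeff_ne_zero toLex.injective).2 hp0
  have hmem : r • b i ∈ Submodule.span R (Set.range b) :=
    Submodule.smul_mem _ _ (Submodule.subset_span ⟨i, rfl⟩)
  have hdeg : supDegree toLex p = supDegree toLex (r • b i) := by
    rw [supDegree_smul_of_monic (hb i) hr0, hi]
  have hcoeff : leadingCoeff toLex p = leadingCoeff toLex (r • b i) := by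
    rw [leadingCoeff_smul_of_monic (hb i)]
  obtain hlt | heq := supDegree_sub_lt_of_leadingCoeff_eq toLex.injective hdeg hcoeff
  · have := ih _ hlt (M.sub_mem hp (M.smul_mem r (hbM i))) rfl
    simpa only [sub_add_cancel] using Submodule.add_mem _ this hmem
  · rwa [heq]

end LeadingExponent

/-! ### A basis of the symmetric polynomials -/

section SymmetricPolynomials

lemma esymm_isHomogeneous (σ R : Type*) [Fintype σ] [CommSemiring R] (i : ℕ) :
    (esymm σ R i).IsHomogeneous i := by
  refine IsHomogeneous.sum _ _ _ fun s hs => ?_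
  simpa [(Finset.mem_powersetCard.1 hs).2] using
    IsHomogeneous.prod s X (fun _ => 1) fun j _ => isHomogeneous_X R j

/-- The substitution `x_j ↦ x_j ^ m` as an endomorphism of the algebra of symmetric polynomials; it
sends `e_i` to `ê_i`. -/
noncomputable def expandSymmetric (σ R : Type*) [CommSemiring R] (m : ℕ) :
    symmetricSubalgebra σ R →ₐ[R] symmetricSubalgebra σ R :=
  ((expand m).comp (symmetricSubalgebra σ R).val).codRestrict _ fun p e => by
    change rename e (expand m p.1) = expand m p.1
    rw [rename_expand, p.2 e]

variable (R : Type*) [CommRing R] {n m : ℕ}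

/-- The monomial `e ^ a = ∏ e_{i+1} ^ a_i` in the elementary symmetric polynomials. -/
noncomputable def esymmMonomial (a : Fin n →₀ ℕ) : symmetricSubalgebra (Fin n) R :=
  esymmAlgHom (Fin n) R n (monomial a 1)

lemma esymmMonomial_add (a a' : Fin n →₀ ℕ) :
    esymmMonomial R (a + a') = esymmMonomial R a * esymmMonomial R a' := by
  simp only [esymmMonomial, ← map_mul, monomial_mul, mul_one]

lemma esymmMonomial_single (i : Fin n) :
    (esymmMonomial R (Finsupp.single i 1) : MvPolynomial (Fin n) R) = esymm (Fin n) R (i + 1) :=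
  esymmAlgHomMonomial_single_one.trans (pow_one _)

lemma monic_esymmMonomial (a : Fin n →₀ ℕ) :
    Monic toLex (esymmMonomial R a : MvPolynomial (Fin n) R) :=
  leadingCoeff_esymmAlgHomMonomial a le_rfl

lemma supDegree_esymmMonomial [Nontrivial R] (a : Fin n →₀ ℕ) :
    ⇑(ofLex (supDegree toLex (esymmMonomial R a : MvPolynomial (Fin n) R))) =
      Fin.accumulate n n a :=
  supDegree_esymmAlgHomMonomial one_ne_zero a le_rfl

lemma esymmMonomial_isHomogeneous (a : Fin n →₀ ℕ) :
    (esymmMonomial R a : MvPolynomial (Fin n) R).IsHomogeneous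
      (∑ i : Fin n, ((i : ℕ) + 1) * a i) := by
  have hprod : (esymmMonomial R a : MvPolynomial (Fin n) R) =
      ∏ i : Fin n, esymm (Fin n) R (i + 1) ^ a i := by
    rw [esymmMonomial, esymmAlgHom_apply, aeval_monomial, map_one, one_mul,
      Finsupp.prod_fintype _ _ fun _ => pow_zero _]
  rw [hprod]
  exact IsHomogeneous.prod _ _ _ fun i _ => (esymm_isHomogeneous _ R (i + 1)).pow (a i)

/-- The product `e ^ c * ê ^ q`, for `c` with entries less than `m`. -/
noncomputable def reducedProduct (p : (Fin n → Fin m) × (Fin n →₀ ℕ)) :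
    symmetricSubalgebra (Fin n) R :=
  esymmMonomial R (Finsupp.equivFunOnFinite.symm fun i => (p.1 i : ℕ)) *
    expandSymmetric (Fin n) R m (esymmMonomial R p.2)

lemma reducedProduct_isHomogeneous (p : (Fin n → Fin m) × (Fin n →₀ ℕ)) :
    (reducedProduct R p : MvPolynomial (Fin n) R).IsHomogeneous
      (∑ i : Fin n, ((i : ℕ) + 1) * (p.1 i : ℕ) + m * ∑ i : Fin n, ((i : ℕ) + 1) * p.2 i) :=
  (esymmMonomial_isHomogeneous R _).mul
    ((esymmMonomial_isHomogeneous R p.2).aeval _ fun i => isHomogeneous_X_pow i m)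

lemma monic_reducedProduct (hm : m ≠ 0) (p : (Fin n → Fin m) × (Fin n →₀ ℕ)) :
    Monic toLex (reducedProduct R p : MvPolynomial (Fin n) R) :=
  (monic_esymmMonomial R _).mul toLex.injective toLex_add
    ((leadingCoeff_expand hm _).trans (monic_esymmMonomial R p.2))

lemma supDegree_reducedProduct [Nontrivial R] (hm : m ≠ 0) (p : (Fin n → Fin m) × (Fin n →₀ ℕ)) :
    ⇑(ofLex (supDegree toLex (reducedProduct R p : MvPolynomial (Fin n) R))) =
      Fin.accumulate n n fun i => (p.1 i : ℕ) + m * p.2 i := by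
  have hexp : Monic toLex (expand m (esymmMonomial R p.2 : MvPolynomial (Fin n) R)) :=
    (leadingCoeff_expand hm _).trans (monic_esymmMonomial R p.2)
  have hmul : supDegree toLex (reducedProduct R p : MvPolynomial (Fin n) R) =
      supDegree toLex
          (esymmMonomial R (Finsupp.equivFunOnFinite.symm fun i => (p.1 i : ℕ)) :
            MvPolynomial (Fin n) R) +
        supDegree toLex (expand m (esymmMonomial R p.2 : MvPolynomial (Fin n) R)) :=
    hexp.supDegree_mul_of_ne_zero_left toLex.injective toLex_add (monic_esymmMonomial R _).ne_zero
  rw [hmul, supDegree_expand hm, ofLex_add, ofLex_toLex, Finsupp.coe_add, Finsupp.coe_smul,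
    supDegree_esymmMonomial, supDegree_esymmMonomial, ← map_nsmul, ← map_add]
  rfl

lemma linearIndependent_reducedProduct [Nontrivial R] (hm : m ≠ 0) :
    LinearIndependent R (reducedProduct R (n := n) (m := m)) := by
  refine LinearIndependent.of_comp (symmetricSubalgebra (Fin n) R).val.toLinearMap
    (linearIndependent_of_monic (monic_reducedProduct R hm) fun p p' h => ?_)
  have hacc := (supDegree_reducedProduct R hm p).symm.trans
    ((congrArg (fun s : Lex (Fin n →₀ ℕ) => ⇑(ofLex s)) h).trans (supDegree_reducedProduct R hm p'))
  have hdigits (i : Fin n) : (p.1 i : ℕ) + m * p.2 i = p'.1 i + m * p'.2 i :=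
    congrFun (Fin.accumulate_injective le_rfl hacc) i
  refine Prod.ext (funext fun i => Fin.ext ?_) (Finsupp.ext fun i => ?_)
  · simpa [Nat.mod_eq_of_lt] using congrArg (· % m) (hdigits i)
  · simpa [Nat.add_mul_div_left, Nat.pos_of_ne_zero hm, Nat.div_eq_of_lt] using
      congrArg (· / m) (hdigits i)

/-- The leading exponent of a symmetric polynomial is antitone, hence of the form `accumulate a`. -/
lemma span_range_reducedProduct [Nontrivial R] (hm : m ≠ 0) :
    Submodule.span R (Set.range (reducedProduct R (n := n) (m := m))) = ⊤ := by
  set φ := (symmetricSubalgebra (Fin n) R).val.toLinearMap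
  have hle : LinearMap.range φ ≤ Submodule.span R (Set.range (φ ∘ reducedProduct R (m := m))) := by
    refine le_span_of_exists_monic_supDegree_eq (fun p => ⟨reducedProduct R p, rfl⟩)
      (monic_reducedProduct R hm) ?_
    rintro _ ⟨⟨f, hf⟩, rfl⟩ -
    set a := Fin.invAccumulate n n ⇑(ofLex (supDegree toLex f))
    refine ⟨(fun i => ⟨a i % m, Nat.mod_lt _ (Nat.pos_of_ne_zero hm)⟩,
      Finsupp.equivFunOnFinite.symm fun i => a i / m), ofLex.injective (DFunLike.coe_injective ?_)⟩
    refine (supDegree_reducedProduct R hm _).trans ?_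
    simp only [Finsupp.equivFunOnFinite_symm_apply_apply, Nat.mod_add_div]
    exact Fin.accumulate_invAccumulate le_rfl (IsSymmetric.antitone_supDegree hf)
  rw [eq_top_iff, ← Submodule.map_le_map_iff_of_injective (f := φ) Subtype.val_injective,
    Submodule.map_top, Submodule.map_span, ← Set.range_comp]
  exact hle

end SymmetricPolynomials

/-! ### The relative coinvariant ring -/

section Coinvariants

variable (R : Type*) [CommRing R] (n m : ℕ)

/-- The ideal `(ê_1, …, ê_n)` of the algebra of symmetric polynomials over a commutative ring; the
index `i : Fin n` stands for `ê_{i+1}`. -/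
noncomputable def expandEsymmIdeal : Ideal (symmetricSubalgebra (Fin n) R) :=
  Ideal.span (Set.range fun i : Fin n =>
    expandSymmetric (Fin n) R m (esymmMonomial R (Finsupp.single i 1)))

variable {n m}

lemma reducedProduct_mul_expandSymmetric (p : (Fin n → Fin m) × (Fin n →₀ ℕ)) (q : Fin n →₀ ℕ) :
    reducedProduct R p * expandSymmetric (Fin n) R m (esymmMonomial R q) =
      reducedProduct R (p.1, p.2 + q) := by
  rw [reducedProduct, reducedProduct, esymmMonomial_add, map_mul, mul_assoc]

lemma expandEsymmIdeal_restrictScalars [Nontrivial R] (hm : m ≠ 0) :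
    (expandEsymmIdeal R n m).restrictScalars R =
      Submodule.span R (reducedProduct R '' {p : (Fin n → Fin m) × (Fin n →₀ ℕ) | p.2 ≠ 0}) := by
  rw [expandEsymmIdeal, Ideal.span,
    ← Submodule.span_smul_of_span_eq_top (span_range_reducedProduct R hm)]
  congr 1
  refine Set.Subset.antisymm ?_ ?_
  · rintro _ ⟨_, ⟨p, rfl⟩, _, ⟨i, rfl⟩, rfl⟩
    refine ⟨(p.1, p.2 + Finsupp.single i 1), fun h => ?_,
      (reducedProduct_mul_expandSymmetric R p _).symm⟩
    simpa using DFunLike.congr_fun h i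
  · rintro _ ⟨⟨c, q⟩, hq, rfl⟩
    obtain ⟨i, hi⟩ := Finsupp.ne_iff.1 hq
    have hle : Finsupp.single i 1 ≤ q := Finsupp.single_le_iff.2 (Nat.one_le_iff_ne_zero.2 hi)
    refine ⟨_, ⟨(c, q - Finsupp.single i 1), rfl⟩, _, ⟨i, rfl⟩, ?_⟩
    exact (reducedProduct_mul_expandSymmetric R _ _).trans (by rw [tsub_add_cancel_of_le hle])

lemma finrank_map_mk_span_reducedProduct [Nontrivial R] (hm : m ≠ 0)
    (t : Set ((Fin n → Fin m) × (Fin n →₀ ℕ))) :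
    Module.finrank R ((Submodule.span R (reducedProduct R '' t)).map
      (Ideal.Quotient.mkₐ R (expandEsymmIdeal R n m)).toLinearMap) =
      {c : Fin n → Fin m | (c, 0) ∈ t}.ncard := by
  have hker : LinearMap.ker (Ideal.Quotient.mkₐ R (expandEsymmIdeal R n m)).toLinearMap =
      Submodule.span R (reducedProduct R '' {p : (Fin n → Fin m) × (Fin n →₀ ℕ) | p.2 ≠ 0}) := by
    rw [← expandEsymmIdeal_restrictScalars R hm]
    ext x
    exact Ideal.Quotient.eq_zero_iff_mem
  have himage : t \ {p | p.2 ≠ 0} = (·, 0) '' {c : Fin n → Fin m | (c, 0) ∈ t} := by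
    ext ⟨c, q⟩
    grind
  rw [finrank_map_span_image_of_ker_eq (linearIndependent_reducedProduct R hm) hker, himage,
    Set.ncard_image_of_injective _ (Prod.mk_left_injective 0)]

end Coinvariants

section Comparison

variable (k : Type) [Field k] (n m : ℕ)

lemma ehatIdeal_eq_expandEsymmIdeal : ehatIdeal k n m = expandEsymmIdeal k n m := by
  have hcoe (i : Fin n) : (expandSymmetric (Fin n) k m (esymmMonomial k (Finsupp.single i 1)) :
      MvPolynomial (Fin n) k) = esymmPow k n m (i + 1) :=
    congrArg (expand m) (esymmMonomial_single k i)
  rw [ehatIdeal, expandEsymmIdeal]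
  congr 1
  ext x
  constructor
  · rintro ⟨i, hi, hx⟩
    obtain ⟨hi1, hin⟩ := Finset.mem_Icc.1 hi
    refine ⟨⟨i - 1, by omega⟩, Subtype.ext ?_⟩
    rw [hcoe, hx, Nat.sub_add_cancel hi1]
  · rintro ⟨i, rfl⟩
    exact ⟨i + 1, Finset.mem_Icc.2 ⟨by omega, by omega⟩, hcoe i⟩

lemma AmnGrading_eq_map (d : ℕ) : AmnGrading k n m d =
    ((homogeneousSubmodule (Fin n) k d).comap
      (symmetricSubalgebra (Fin n) k).val.toLinearMap).map
        (Ideal.Quotient.mkₐ k (ehatIdeal k n m)).toLinearMap := by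
  set S := (homogeneousSubmodule (Fin n) k d).comap
    (symmetricSubalgebra (Fin n) k).val.toLinearMap
  exact Submodule.span_eq (S.map (Ideal.Quotient.mkₐ k (ehatIdeal k n m)).toLinearMap)

end Comparison

end RelativeCoinvariant

open RelativeCoinvariant in
theorem Amn_dim_and_hilbert_polynomial_general
    (R : Type*) [CommRing R] [Nontrivial R] (m n : ℕ) (hm : m ≠ 0) :
    Module.finrank R (symmetricSubalgebra (Fin n) R ⧸ expandEsymmIdeal R n m) = m ^ n ∧
    ∀ d : ℕ, Module.finrank R
        (((homogeneousSubmodule (Fin n) R d).comap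
          (symmetricSubalgebra (Fin n) R).val.toLinearMap).map
            (Ideal.Quotient.mkₐ R (expandEsymmIdeal R n m)).toLinearMap) =
      ((Finset.univ : Finset (Fin n → Fin m)).filter
        (fun c => ∑ i : Fin n, ((i : ℕ) + 1) * ((c i : ℕ)) = d)).card := by
  constructor
  · have h := finrank_map_mk_span_reducedProduct R hm (n := n) Set.univ
    rw [Set.image_univ, span_range_reducedProduct R hm, Submodule.map_top, LinearMap.range_eq_top.2
      (Ideal.Quotient.mkₐ_surjective R _), finrank_top] at h
    simpa using h
  · intro d
    rw [comap_homogeneousSubmodule_eq_span Subtype.val_injective (span_range_reducedProduct R hm)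
      (reducedProduct_isHomogeneous R) d, finrank_map_mk_span_reducedProduct R hm,
      ← Set.ncard_coe_finset]
    congr 1
    ext c
    simp

/-- Let `k` be a field of characteristic 0 and `m, n ≥ 1`.  Then
`dim_k A(m,n) = m^n` and the Hilbert polynomial of `A(m,n)` is
`p(A(m,n),t) = Π_{i=1}^n (1 − t^{im})/(1 − t^i)
            = Π_{i=1}^n (1 + t^i + t^{2i} + ⋯ + t^{(m−1)i})`,
i.e. the coefficient of `t^d` is the number of tuples `(c_1, …, c_n)` with
`0 ≤ c_i ≤ m − 1` and `Σ i·c_i = d`. -/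
theorem Amn_dim_and_hilbert_polynomial
    (k : Type) [Field k] [CharZero k] (m n : ℕ) (hm : 1 ≤ m) (hn : 1 ≤ n) :
    Module.finrank k (Amn k n m) = m ^ n ∧
    ∀ d : ℕ, Module.finrank k (AmnGrading k n m d) =
      ((Finset.univ : Finset (Fin n → Fin m)).filter
        (fun c => ∑ i : Fin n, ((i : ℕ) + 1) * ((c i : ℕ)) = d)).card := by
  have h := (RelativeCoinvariant.ehatIdeal_eq_expandEsymmIdeal k n m).symm ▸
    Amn_dim_and_hilbert_polynomial_general k m n (Nat.one_le_iff_ne_zero.1 hm)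
  exact ⟨h.1, fun d => RelativeCoinvariant.AmnGrading_eq_map k n m d ▸ h.2 d⟩
end
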